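/- arXiv:1812.11259 — 4 statements merged into one kernel-verified Lean document; each statement's English description precedes it below -/
import Mathlib

section
/- A *-distribution μ on ℂ⟨Z_l, Z_{l*}, Z_r, Z_{r*}⟩ is η-diagonal if and only if both of the following hold: (i) μ(Z_w) = 0 for every word w ∈ W⁺ that is not mixed alternating; and (ii) for every mixed alternating word w with canonical factorization determining the bi-interval partition π_w = {J₁, …, J_d}, one has μ(Z_w) = μ(Z_{w|_{J₁}}) ⋯ μ(Z_{w|_{J_d}}). -/
open scoped BigOperators

/-- Rank realizing the χ-order: left indices in increasing order, then right indices
in decreasing order. `true` stands for `l`, `false` for `r`. -/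
def chiRank {n : ℕ} (χ : Fin n → Bool) (i : Fin n) : ℕ :=
  if χ i then (i : ℕ) else 2 * n - (i : ℕ)

/-- The strict order `≺_χ`. -/
def chiLT {n : ℕ} (χ : Fin n → Bool) (i j : Fin n) : Prop :=
  chiRank χ i < chiRank χ j

/-- A finset is a χ-interval iff it is order-convex for `≺_χ`. -/
def IsChiInterval {n : ℕ} (χ : Fin n → Bool) (V : Finset (Fin n)) : Prop :=
  ∀ i j k : Fin n, i ∈ V → k ∈ V → chiLT χ i j → chiLT χ j k → j ∈ V

/-- A set partition of `{1, …, n}` encoded as a finset of (nonempty) blocks. -/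
def IsPartition {n : ℕ} (P : Finset (Finset (Fin n))) : Prop :=
  (∅ ∉ P) ∧ ∀ i : Fin n, ∃! V : Finset (Fin n), V ∈ P ∧ i ∈ V

open scoped Classical in
/-- The set of bi-interval partitions relative to χ. -/
noncomputable def BIset {n : ℕ} (χ : Fin n → Bool) : Finset (Finset (Finset (Fin n))) :=
  Finset.univ.filter (fun P => IsPartition P ∧ ∀ V ∈ P, IsChiInterval χ V)

/-- `φ_V(a₁,…,aₙ)`: apply φ to the product of the `a_i`, `i ∈ V`, in increasing index order. -/
def phiV {A : Type*} [Monoid A] (φ : A → ℂ) {n : ℕ} (a : Fin n → A) (V : Finset (Fin n)) : ℂ :=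
  φ ((V.sort (· ≤ ·)).map a).prod

/-- The Boolean (l,r)-cumulant `B_χ`. -/
noncomputable def Bcum {A : Type*} [Monoid A] (φ : A → ℂ) {n : ℕ} (χ : Fin n → Bool)
    (a : Fin n → A) : ℂ :=
  ∑ P ∈ BIset χ, (-1 : ℂ) ^ (P.card - 1) * ∏ V ∈ P, phiV φ a V

/-- The list of indices `1, …, n` sorted in the `≺_χ` order. -/
def chiSorted {n : ℕ} (χ : Fin n → Bool) : List (Fin n) :=
  (List.finRange n).mergeSort (fun i j => chiRank χ i ≤ chiRank χ j)

/-- Letters of the alphabet `{l, l*, r, r*}`: first component `true` = left (`l`-type),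
second component `true` = starred. -/
abbrev Letter := Bool × Bool

/-- The left/right shape of a word. -/
def chiW {n : ℕ} (w : Fin n → Letter) : Fin n → Bool := fun i => (w i).1

/-- The monomial `Z_w` in the free algebra on the four generators. -/
noncomputable def Zword {n : ℕ} (w : Fin n → Letter) : FreeAlgebra ℂ Letter :=
  (List.ofFn (fun i => FreeAlgebra.ι ℂ (w i))).prod

/-- The monomial `Z_{w|_V}`, the letters of `w` at positions in `V`,
multiplied in increasing index order. -/
noncomputable def ZwordOn {n : ℕ} (w : Fin n → Letter) (V : Finset (Fin n)) :
    FreeAlgebra ℂ Letter :=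
  ((V.sort (· ≤ ·)).map (fun i => FreeAlgebra.ι ℂ (w i))).prod

/-- The Boolean (l,r)-cumulant `B_{χ_w}(Z_w)` of a `*`-distribution `μ` at the word `w`. -/
noncomputable def BcumW (μ : FreeAlgebra ℂ Letter → ℂ) {n : ℕ} (w : Fin n → Letter) : ℂ :=
  Bcum μ (chiW w) (fun i => FreeAlgebra.ι ℂ (w i))

/-- The sequence of star-parities of the letters of `w`, rearranged in the `≺_{χ_w}` order. -/
def wordStarSeq {n : ℕ} (w : Fin n → Letter) : List Bool :=
  (chiSorted (chiW w)).map (fun i => (w i).2)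

/-- A word is alternating: even length, and in the rearranged word starred and unstarred
letters alternate (all `l`-letters automatically precede all `r`-letters in the
rearranged word). -/
def AlternatingW {n : ℕ} (w : Fin n → Letter) : Prop :=
  Even n ∧ (wordStarSeq w).Chain' (· ≠ ·)

/-- `chunks` is the canonical factorization of the rearranged word of `w`: a concatenation
of nonempty consecutive blocks, each of alternating shape (even length, star-parities
alternating), with the classes (star-parity of the first letter) of consecutive blocks
distinct. -/
def IsCanonFact {n : ℕ} (w : Fin n → Letter) (chunks : List (List (Fin n))) : Prop :=
  chunks.flatten = chiSorted (chiW w) ∧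
  (∀ c ∈ chunks, c ≠ [] ∧ Even c.length ∧ (c.map (fun i => (w i).2)).Chain' (· ≠ ·)) ∧
  chunks.Chain' (fun c c' =>
    (c.map (fun i => (w i).2)).head? ≠ (c'.map (fun i => (w i).2)).head?)

/-- A word is mixed alternating if its rearranged word admits a canonical factorization
into blocks of alternating shape with alternating classes. -/
def MixedAlternatingW {n : ℕ} (w : Fin n → Letter) : Prop :=
  ∃ chunks : List (List (Fin n)), IsCanonFact w chunks

/-- A `*`-distribution is η-diagonal if its Boolean (l,r)-cumulants vanish at every
non-alternating word. -/
def EtaDiagonalDist (μ : FreeAlgebra ℂ Letter → ℂ) : Prop :=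
  ∀ n : ℕ, 1 ≤ n → ∀ w : Fin n → Letter, ¬ AlternatingW w → BcumW μ w = 0

section abstractPart
variable {α : Type*} (st : α → Bool)

def AltL (c : List α) : Prop := Even c.length ∧ (c.map st).IsChain (· ≠ ·)

def Prs : List α → Prop
  | [] => True
  | [_] => False
  | x :: y :: t => st x ≠ st y ∧ Prs t

def CanonL (chunks : List (List α)) : Prop :=
  (∀ c ∈ chunks, c ≠ [] ∧ Even c.length ∧ (c.map st).IsChain (· ≠ ·)) ∧
  chunks.IsChain (fun c c' => (c.map st).head? ≠ (c'.map st).head?)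

variable {st}

lemma prs_append : ∀ {c t : List α}, Prs st c → Prs st t → Prs st (c ++ t)
  | [], _, _, h => h
  | [_], _, h, _ => h.elim
  | _ :: _ :: _, _, h, h' => ⟨h.1, prs_append h.2 h'⟩

lemma prs_of_alt : ∀ {c : List α}, AltL st c → Prs st c
  | [], _ => trivial
  | [_], h => by have := h.1; simp at this
  | x :: y :: t, h => by
    obtain ⟨h1, h2⟩ := h
    simp only [List.map_cons, List.isChain_cons_cons] at h2
    refine ⟨h2.1, prs_of_alt ⟨?_, h2.2.tail⟩⟩
    simp only [List.length_cons] at h1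
    grind

lemma alt_head_last : ∀ {c : List α}, AltL st c → ∀ x ∈ c.head?, ∀ y ∈ c.getLast?, st x ≠ st y
  | [], _ => by simp
  | [_], h => by have := h.1; simp at this
  | [x, y], h => by
    have := h.2
    simpa using this
  | x :: y :: z :: t, h => by
    obtain ⟨h1, h2⟩ := h
    simp only [List.map_cons, List.isChain_cons_cons] at h2
    have ih := alt_head_last (c := z :: t) ⟨by simp only [List.length_cons] at h1 ⊢; grind, by
      simpa using h2.2.2⟩ z (by simp)
    intro a ha b hb
    have := ih b (by simpa using hb)
    simp at ha
    subst ha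
    have e1 := h2.1
    have e2 := h2.2.1
    revert this e1 e2
    cases st x <;> cases st y <;> cases st z <;> cases st b <;> simp

lemma canon_prs {chunks : List (List α)} (h : ∀ c ∈ chunks, AltL st c) : Prs st chunks.flatten := by
  induction chunks with
  | nil => trivial
  | cons c cs ih =>
    rw [List.flatten_cons]
    exact prs_append (prs_of_alt (h c (by simp))) (ih fun d hd => h d (by simp [hd]))

lemma prs_canon : ∀ {s : List α}, Prs st s → ∃ L : List (List α), L.flatten = s ∧ CanonL st L
  | [], _ => ⟨[], rfl, by simp [CanonL]⟩
  | [_], h => h.elim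
  | x :: y :: t, h => by
    obtain ⟨L, rfl, hL⟩ := prs_canon h.2
    cases L with
    | nil => exact ⟨[[x, y]], by simp, by
        refine ⟨?_, by simp⟩
        intro c hc
        simp at hc
        subst hc
        simpa using h.1⟩
    | cons c cs =>
      obtain ⟨h1, h2⟩ := hL
      have hc := h1 c (by simp)
      obtain ⟨z, c', rfl⟩ := List.exists_cons_of_ne_nil hc.1
      by_cases hz : st x = st z
      · refine ⟨(x :: y :: z :: c') :: cs, by simp, ?_, ?_⟩
        · intro d hd
          rcases List.mem_cons.1 hd with rfl | hd
          · refine ⟨by simp, ?_, ?_⟩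
            · have := hc.2.1
              simp only [List.length_cons] at this ⊢
              grind
            · have h3 := hc.2.2
              simp only [List.map_cons, List.isChain_cons_cons] at h3 ⊢
              exact ⟨h.1, by rw [← hz]; exact h.1.symm, h3⟩
          · exact h1 d (by simp [hd])
        · cases cs with
          | nil => simp
          | cons d ds =>
            simp only [List.isChain_cons_cons] at h2 ⊢
            refine ⟨?_, h2.2⟩
            have := h2.1
            simpa [hz] using this
      · refine ⟨[x, y] :: (z :: c') :: cs, by simp, ?_, ?_⟩
        · intro d hd
          rcases List.mem_cons.1 hd with rfl | hd
          · exact ⟨by simp, by simp, by simpa using h.1⟩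
          · exact h1 d hd
        · rw [List.isChain_cons_cons]
          exact ⟨by simpa using hz, h2⟩

variable {f b : List α → ℂ} {G : List α → Prop}

lemma split_rec (hrec : ∀ s, G s → s ≠ [] → f s = ∑ k ∈ Finset.range s.length,
      b (s.take (k+1)) * f (s.drop (k+1))) {c t : List α} (hG : G (c ++ t)) (ht : t ≠ []) :
    f (c ++ t) = ∑ k ∈ Finset.range c.length, b (c.take (k+1)) * f (c.drop (k+1) ++ t)
      + ∑ k ∈ Finset.range t.length, b (c ++ t.take (k+1)) * f (t.drop (k+1)) := by
  rw [hrec _ hG (by simp [ht]), List.length_append, Finset.sum_range_add]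
  congr 1
  · refine Finset.sum_congr rfl fun k hk => ?_
    have hk := Finset.mem_range.1 hk
    rw [List.take_append_of_le_length (by omega), List.drop_append_of_le_length (by omega)]
  · refine Finset.sum_congr rfl fun k hk => ?_
    rw [add_assoc, List.take_length_add_append, List.drop_length_add_append]

/-- Core identity: the part of the recursion inside an alternating chunk factors. -/
lemma inner_chunk_sum (hrec : ∀ s, G s → s ≠ [] → f s = ∑ k ∈ Finset.range s.length,
      b (s.take (k+1)) * f (s.drop (k+1))) {c t : List α} (hc : AltL st c)
    (hcn : c ≠ []) (hGc : G c)
    (hb : ∀ k < c.length, ¬ AltL st (c.take (k+1)) → b (c.take (k+1)) = 0)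
    (hJ : ∀ x ∈ c.getLast?, ∀ y ∈ t.head?, st x = st y)
    (hF : ∀ k < c.length, AltL st (c.drop (k+1)) →
      (∀ x ∈ (c.drop (k+1)).getLast?, ∀ y ∈ t.head?, st x = st y) →
      f (c.drop (k+1) ++ t) = f (c.drop (k+1)) * f t) :
    ∑ k ∈ Finset.range c.length, b (c.take (k+1)) * f (c.drop (k+1) ++ t) = f c * f t := by
  rw [hrec c hGc hcn, Finset.sum_mul]
  refine Finset.sum_congr rfl fun k hk => ?_
  have hk := Finset.mem_range.1 hk
  by_cases hA : AltL st (c.take (k+1))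
  · rw [hF k hk, mul_assoc]
    · have h1 := hA.1
      have h2 := hc.1
      constructor
      · rw [List.length_take_of_le (by omega)] at h1
        rw [List.length_drop]
        rw [Nat.even_sub (by omega)]
        tauto
      · rw [List.map_drop]
        exact hc.2.drop _
    · intro x hx y hy
      refine hJ x ?_ y hy
      rw [List.getLast?_drop] at hx
      split_ifs at hx with h
      · simp at hx
      · exact hx
  · rw [hb k hk hA]; ring

lemma not_alt_append {c t : List α} (hcn : c ≠ []) (ht : t ≠ [])
    (hJ : ∀ x ∈ c.getLast?, ∀ y ∈ t.head?, st x = st y) (k : ℕ) :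
    ¬ AltL st (c ++ t.take (k+1)) := by
  rintro ⟨-, h⟩
  rw [List.map_append, List.isChain_append] at h
  obtain ⟨y, t, rfl⟩ := List.exists_cons_of_ne_nil ht
  have hx := List.getLast?_eq_some_getLast hcn
  refine h.2.2 (st (c.getLast hcn)) ?_ (st y) (by simp) (hJ _ hx y (by simp))
  simp [hx]

lemma fact_fwd (hG : ∀ s s', s'.Sublist s → G s → G s') (hf0 : f [] = 1)
    (hrec : ∀ s, G s → s ≠ [] → f s = ∑ k ∈ Finset.range s.length,
      b (s.take (k+1)) * f (s.drop (k+1)))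
    (hb : ∀ c, G c → c ≠ [] → ¬ AltL st c → b c = 0) {t : List α} (ht : t ≠ []) :
    ∀ N (c : List α), c.length ≤ N → AltL st c →
      (∀ x ∈ c.getLast?, ∀ y ∈ t.head?, st x = st y) → G (c ++ t) →
      f (c ++ t) = f c * f t := by
  intro N
  induction N with
  | zero =>
    intro c hc _ _ _
    have : c = [] := List.eq_nil_of_length_eq_zero (by omega)
    subst this
    simp [hf0]
  | succ N ih =>
    intro c hcN hc hJ hGct
    by_cases hcn : c = []
    · subst hcn; simp [hf0]
    rw [split_rec hrec hGct ht, inner_chunk_sum hrec hc hcn (hG _ _ (by simp) hGct) _ hJ]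
    · rw [Finset.sum_eq_zero, add_zero]
      intro k hk
      rw [hb, zero_mul]
      · exact hG _ _ (List.Sublist.append_left (List.take_sublist _ _) _) hGct
      · simp [hcn]
      · exact not_alt_append hcn ht hJ k
    · intro k hk hA hJ'
      refine ih _ (by rw [List.length_drop]; omega) hA hJ' ?_
      exact hG _ _ (List.Sublist.append_right (List.drop_sublist _ _) _) hGct
    · intro k hk h
      refine hb _ (hG _ _ ((List.take_sublist _ _).trans (List.sublist_append_left _ t)) hGct) ?_ h
      intro h0
      have := congrArg List.length h0
      rw [List.length_take_of_le (by omega)] at this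
      simp at this

lemma fwd_zero (hG : ∀ s s', s'.Sublist s → G s → G s')
    (hrec : ∀ s, G s → s ≠ [] → f s = ∑ k ∈ Finset.range s.length,
      b (s.take (k+1)) * f (s.drop (k+1)))
    (hb : ∀ c, G c → c ≠ [] → ¬ AltL st c → b c = 0) :
    ∀ N (s : List α), s.length ≤ N → G s → ¬ Prs st s → f s = 0 := by
  intro N
  induction N with
  | zero =>
    intro s hs _ h
    have : s = [] := List.eq_nil_of_length_eq_zero (by omega)
    subst this
    exact (h trivial).elim
  | succ N ih =>
    intro s hs hGs h
    have hsn : s ≠ [] := by rintro rfl; exact h trivial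
    rw [hrec s hGs hsn]
    refine Finset.sum_eq_zero fun k hk => ?_
    have hk := Finset.mem_range.1 hk
    by_cases hA : AltL st (s.take (k+1))
    · rw [ih (s.drop (k+1)), mul_zero]
      · rw [List.length_drop]; omega
      · exact hG _ _ (List.drop_sublist _ _) hGs
      · intro h'
        apply h
        rw [← List.take_append_drop (k+1) s]
        exact prs_append (prs_of_alt hA) h'
    · rw [hb _ (hG _ _ (List.take_sublist _ _) hGs) _ hA, zero_mul]
      simp [hsn]

/-- link between consecutive chunks -/
lemma canon_link {c d : List α} {ds : List (List α)} (h : CanonL st (c :: d :: ds)) :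
    ∀ x ∈ c.getLast?, ∀ y ∈ (d :: ds).flatten.head?, st x = st y := by
  obtain ⟨h1, h2⟩ := h
  intro x hx y hy
  have hc := h1 c (by simp)
  have hd := h1 d (by simp)
  obtain ⟨u, d, rfl⟩ := List.exists_cons_of_ne_nil hd.1
  obtain ⟨v, c, rfl⟩ := List.exists_cons_of_ne_nil hc.1
  have h3 := alt_head_last hc.2 v (by simp) x hx
  rw [List.isChain_cons_cons] at h2
  have h4 : st v ≠ st u := by simpa using h2.1
  simp at hy
  subst hy
  revert h3 h4
  cases st x <;> cases st u <;> cases st v <;> simp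

lemma canon_tail {c : List α} {ds : List (List α)} (h : CanonL st (c :: ds)) : CanonL st ds :=
  ⟨fun d hd => h.1 d (by simp [hd]), h.2.tail⟩

lemma fwd_fact (hG : ∀ s s', s'.Sublist s → G s → G s') (hf0 : f [] = 1)
    (hrec : ∀ s, G s → s ≠ [] → f s = ∑ k ∈ Finset.range s.length,
      b (s.take (k+1)) * f (s.drop (k+1)))
    (hb : ∀ c, G c → c ≠ [] → ¬ AltL st c → b c = 0) :
    ∀ (L : List (List α)), CanonL st L → G L.flatten → f L.flatten = (L.map f).prod := by
  intro L
  induction L with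
  | nil => simp [hf0]
  | cons c cs ih =>
    intro hL hGL
    rw [List.flatten_cons] at hGL
    rw [List.map_cons, List.prod_cons,
      ← ih (canon_tail hL) (hG _ _ (List.sublist_append_right _ _) hGL)]
    rw [List.flatten_cons]
    cases cs with
    | nil => simp [hf0]
    | cons d ds =>
      refine fact_fwd hG hf0 hrec hb ?_ _ c le_rfl (hL.1 c (by simp)).2 (canon_link hL) hGL
      have := (hL.1 d (by simp)).1
      simp [this]

lemma bwd_fact (hG : ∀ s s', s'.Sublist s → G s → G s') (hf0 : f [] = 1)
    (h2 : ∀ (L : List (List α)), CanonL st L → G L.flatten → f L.flatten = (L.map f).prod)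
    {c t : List α} (hc : AltL st c) {L : List (List α)} (hLt : L.flatten = t) (hL : CanonL st L)
    (hJ : ∀ x ∈ c.getLast?, ∀ y ∈ t.head?, st x = st y) (hGct : G (c ++ t)) :
      f (c ++ t) = f c * f t := by
  by_cases hcn : c = []
  · subst hcn; simp [hf0]
  subst hLt
  rw [h2 L hL (hG _ _ (List.sublist_append_right _ _) hGct)]
  have := h2 (c :: L) ?_ hGct
  · simpa using this
  · refine ⟨?_, ?_⟩
    · intro d hd
      rcases List.mem_cons.1 hd with rfl | hd
      · exact ⟨hcn, hc⟩
      · exact hL.1 d hd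
    · cases L with
      | nil => simp
      | cons d ds =>
        rw [List.isChain_cons_cons]
        refine ⟨?_, hL.2⟩
        obtain ⟨u, d, rfl⟩ := List.exists_cons_of_ne_nil (hL.1 d (by simp)).1
        obtain ⟨v, c', rfl⟩ := List.exists_cons_of_ne_nil hcn
        have hx := List.getLast?_eq_some_getLast hcn
        have h3 := hJ _ hx u (by simp)
        have h4 := alt_head_last hc v (by simp) _ hx
        rw [h3] at h4
        simpa using h4

lemma bwd (hG : ∀ s s', s'.Sublist s → G s → G s') (hf0 : f [] = 1)
    (hrec : ∀ s, G s → s ≠ [] → f s = ∑ k ∈ Finset.range s.length,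
      b (s.take (k+1)) * f (s.drop (k+1)))
    (h1 : ∀ s, G s → ¬ Prs st s → f s = 0)
    (h2 : ∀ (L : List (List α)), CanonL st L → G L.flatten → f L.flatten = (L.map f).prod) :
    ∀ N (s : List α), s.length ≤ N → G s → s ≠ [] → ¬ AltL st s → b s = 0 := by
  intro N
  induction N with
  | zero =>
    intro s hs _ h
    exact (h (List.eq_nil_of_length_eq_zero (by omega))).elim
  | succ N ih =>
    intro s hs hGs hsn hA
    by_cases hP : Prs st s
    · obtain ⟨L, rfl, hL⟩ := prs_canon hP
      cases L with
      | nil => simp at hsn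
      | cons c cs =>
      cases cs with
      | nil =>
        refine (hA ?_).elim
        have h := (hL.1 c (by simp)).2
        rw [List.flatten_cons, List.flatten_nil, List.append_nil]
        exact h
      | cons d ds =>
      have hJ := canon_link hL
      have hc := hL.1 c (by simp)
      have hd := hL.1 d (by simp)
      have hcan := canon_tail hL
      rw [List.flatten_cons] at hs hGs hA ⊢
      generalize hLt : (d :: ds).flatten = t at *
      have ht : t ≠ [] := by subst hLt; simp [hd.1]
      have hclen : 0 < c.length := List.length_pos_iff.2 hc.1
      have htlen : 0 < t.length := List.length_pos_iff.2 ht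
      rw [List.length_append] at hs
      have e1 := split_rec hrec hGs ht
      rw [inner_chunk_sum hrec hc.2 hc.1 (hG _ _ (by simp) hGs) _ hJ] at e1
      · rw [bwd_fact hG hf0 h2 hc.2 hLt hcan hJ hGs] at e1
        obtain ⟨m, hm⟩ : ∃ m, t.length = m + 1 := ⟨t.length - 1, by omega⟩
        rw [hm, Finset.sum_range_succ, Finset.sum_eq_zero, ← hm] at e1
        · simpa [hf0] using e1
        · intro k hk
          have hk := Finset.mem_range.1 hk
          rw [ih, zero_mul]
          · rw [List.length_append, List.length_take_of_le (by omega)]; omega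
          · exact hG _ _ (List.Sublist.append_left (List.take_sublist _ _) _) hGs
          · simp [hc.1]
          · exact not_alt_append hc.1 ht hJ k
      · intro k hk hA' hJ'
        refine bwd_fact hG hf0 h2 hA' hLt hcan hJ' ?_
        exact hG _ _ (List.Sublist.append_right (List.drop_sublist _ _) _) hGs
      · intro k hk h
        refine ih _ ?_ (hG _ _ ((List.take_sublist _ _).trans (List.sublist_append_left _ t)) hGs) ?_ h
        · rw [List.length_take_of_le (by omega)]; omega
        · simp [hc.1]
    · have e := hrec s hGs hsn
      rw [h1 s hGs hP] at e
      have hl : 0 < s.length := List.length_pos_iff.2 hsn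
      obtain ⟨m, hm⟩ : ∃ m, s.length = m + 1 := ⟨s.length - 1, by omega⟩
      rw [hm, Finset.sum_range_succ, Finset.sum_eq_zero, ← hm] at e
      · simpa [hf0] using e.symm
      · intro k hk
        have hk := Finset.mem_range.1 hk
        by_cases hA' : AltL st (s.take (k+1))
        · rw [h1 (s.drop (k+1)), mul_zero]
          · exact hG _ _ (List.drop_sublist _ _) hGs
          · intro h'
            apply hP
            rw [← List.take_append_drop (k+1) s]
            exact prs_append (prs_of_alt hA') h'
        · rw [ih _ _ (hG _ _ (List.take_sublist _ _) hGs) _ hA', zero_mul]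
          · rw [List.length_take_of_le (by omega)]; omega
          · simp [hsn]

end abstractPart
section partPart
set_option linter.unusedSectionVars false
open Classical

variable {α : Type*} [Fintype α] [DecidableEq α]

def IsPt (ρ : α → ℕ) (U : Finset α) (P : Finset (Finset α)) : Prop :=
  ∅ ∉ P ∧ (∀ V ∈ P, V ⊆ U) ∧ (∀ i ∈ U, ∃ V ∈ P, i ∈ V) ∧
  (∀ V ∈ P, ∀ V' ∈ P, ∀ i, i ∈ V → i ∈ V' → V = V') ∧
  (∀ V ∈ P, ∀ i j k, i ∈ V → k ∈ V → j ∈ U → ρ i < ρ j → ρ j < ρ k → j ∈ V)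

noncomputable def SP (ρ : α → ℕ) (g : Finset α → ℂ) (U : Finset α) : ℂ :=
  ∑ P ∈ Finset.univ.filter (fun P => IsPt ρ U P), ∏ V ∈ P, (- g V)

lemma isPt_insert {ρ : α → ℕ} {A D : Finset α} {P : Finset (Finset α)}
    (hAD : ∀ a ∈ A, ∀ d ∈ D, ρ a < ρ d) (hD : D.Nonempty) (h : IsPt ρ A P) :
    IsPt ρ (A ∪ D) (insert D P) := by
  obtain ⟨h1, h2, h3, h4, h5⟩ := h
  have hdisj : ∀ i ∈ A, i ∉ D := fun i hi hi' => lt_irrefl _ (hAD i hi i hi')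
  refine ⟨?_, ?_, ?_, ?_, ?_⟩
  · simp only [Finset.mem_insert, not_or]
    exact ⟨hD.ne_empty.symm, h1⟩
  · intro V hV
    rcases Finset.mem_insert.1 hV with rfl | hV
    · exact Finset.subset_union_right
    · exact (h2 V hV).trans Finset.subset_union_left
  · intro i hi
    rcases Finset.mem_union.1 hi with hi | hi
    · obtain ⟨V, hV, hiV⟩ := h3 i hi
      exact ⟨V, Finset.mem_insert_of_mem hV, hiV⟩
    · exact ⟨D, Finset.mem_insert_self _ _, hi⟩
  · intro V hV V' hV' i hi hi'
    rcases Finset.mem_insert.1 hV with e | h <;> rcases Finset.mem_insert.1 hV' with e' | h'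
    · rw [e, e']
    · exact (hdisj i (h2 _ h' hi') (e ▸ hi)).elim
    · exact (hdisj i (h2 _ h hi) (e' ▸ hi')).elim
    · exact h4 V h V' h' i hi hi'
  · intro V hV i j k hi hk hj hij hjk
    rcases Finset.mem_insert.1 hV with rfl | hV
    · rcases Finset.mem_union.1 hj with hj | hj
      · exact (lt_asymm hij (hAD j hj i hi)).elim
      · exact hj
    · rcases Finset.mem_union.1 hj with hj | hj
      · exact h5 V hV i j k hi hk hj hij hjk
      · exact (lt_asymm hjk (hAD k (h2 V hV hk) j hj)).elim

lemma isPt_erase {ρ : α → ℕ} {A D : Finset α} {P : Finset (Finset α)}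
    (hAD : ∀ a ∈ A, ∀ d ∈ D, ρ a < ρ d) (hDP : D ∈ P) (h : IsPt ρ (A ∪ D) P) :
    IsPt ρ A (P.erase D) := by
  obtain ⟨h1, h2, h3, h4, h5⟩ := h
  have hdisj : ∀ i ∈ A, i ∉ D := fun i hi hi' => lt_irrefl _ (hAD i hi i hi')
  refine ⟨?_, ?_, ?_, ?_, ?_⟩
  · exact fun h => h1 (Finset.mem_of_mem_erase h)
  · intro V hV i hi
    obtain ⟨hne, hV⟩ := Finset.mem_erase.1 hV
    rcases Finset.mem_union.1 (h2 V hV hi) with h | h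
    · exact h
    · exact (hne (h4 _ hV _ hDP i hi h)).elim
  · intro i hi
    obtain ⟨V, hV, hiV⟩ := h3 i (Finset.mem_union_left _ hi)
    refine ⟨V, Finset.mem_erase.2 ⟨?_, hV⟩, hiV⟩
    rintro rfl
    exact hdisj i hi hiV
  · intro V hV V' hV'
    exact h4 V (Finset.mem_of_mem_erase hV) V' (Finset.mem_of_mem_erase hV')
  · intro V hV i j k hi hk hj
    exact h5 V (Finset.mem_of_mem_erase hV) i j k hi hk (Finset.mem_union_left _ hj)

lemma take_drop_lt {ρ : α → ℕ} {s : List α} (hs : s.Pairwise (fun i j => ρ i < ρ j)) (k : ℕ) :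
    ∀ a ∈ (s.take k).toFinset, ∀ d ∈ (s.drop k).toFinset, ρ a < ρ d := by
  rw [← List.take_append_drop k s, List.pairwise_append] at hs
  intro a ha d hd
  exact hs.2.2 a (List.mem_toFinset.1 ha) d (List.mem_toFinset.1 hd)

lemma take_union_drop (s : List α) (k : ℕ) :
    (s.take k).toFinset ∪ (s.drop k).toFinset = s.toFinset := by
  rw [← List.toFinset_append, List.take_append_drop]

lemma getLast_mem_drop {s : List α} (hsn : s ≠ []) {k : ℕ} (hk : k < s.length) :
    s.getLast hsn ∈ (s.drop k).toFinset := by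
  rw [List.mem_toFinset, ← List.getLast_drop (i := k) (by simp; omega)]
  exact List.getLast_mem _

/-- a block containing the last element is a final segment -/
lemma exists_drop {ρ : α → ℕ} {s : List α} (hs : s.Pairwise (fun i j => ρ i < ρ j)) (hsn : s ≠ [])
    {V : Finset α} (hVs : V ⊆ s.toFinset) (hV : s.getLast hsn ∈ V)
    (hconv : ∀ i j k, i ∈ V → k ∈ V → j ∈ s.toFinset → ρ i < ρ j → ρ j < ρ k → j ∈ V) :
    ∃ k < s.length, (s.drop k).toFinset = V := by
  induction s with
  | nil => exact (hsn rfl).elim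
  | cons x xs ih =>
    by_cases hx : x ∈ V
    · refine ⟨0, by simp, ?_⟩
      refine Finset.Subset.antisymm ?_ hVs
      intro j hj
      rw [List.drop_zero] at hj
      have hj' := List.mem_toFinset.1 hj
      rcases List.mem_cons.1 hj' with rfl | hjx
      · exact hx
      · by_cases hjl : j = (x :: xs).getLast hsn
        · rw [hjl]; exact hV
        refine hconv x j _ hx hV hj ?_ ?_
        · exact (List.pairwise_cons.1 hs).1 j hjx
        · have e := List.dropLast_append_getLast hsn
          rw [← e, List.pairwise_append] at hs
          rw [← e] at hj'
          rcases List.mem_append.1 hj' with h | h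
          · exact hs.2.2 j h _ (by simp)
          · exact (hjl (by simpa using h)).elim
    · have hxs : xs ≠ [] := by
        rintro rfl
        simp at hV
        exact hx hV
      have a1 : V ⊆ xs.toFinset := by
        intro i hi
        have := hVs hi
        rw [List.mem_toFinset, List.mem_cons] at this
        rcases this with rfl | h
        · exact (hx hi).elim
        · exact List.mem_toFinset.2 h
      have a2 : xs.getLast hxs ∈ V := by rwa [List.getLast_cons hxs] at hV
      obtain ⟨k, hk, h⟩ := ih (List.pairwise_cons.1 hs).2 hxs a1 a2
        (fun i j k hi hk hj => hconv i j k hi hk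
          (List.mem_toFinset.2 (List.mem_cons_of_mem _ (List.mem_toFinset.1 hj))))
      exact ⟨k+1, by simpa using hk, by simpa using h⟩

lemma SP_rec {ρ : α → ℕ} (g : Finset α → ℂ) {s : List α}
    (hs : s.Pairwise (fun i j => ρ i < ρ j)) (hsn : s ≠ []) :
    SP ρ g s.toFinset = ∑ k ∈ Finset.range s.length,
      SP ρ g (s.take k).toFinset * (- g (s.drop k).toFinset) := by
  have hnd : s.Nodup := hs.imp (fun h e => by subst e; exact lt_irrefl _ h)
  have hlast : ∀ k < s.length, ∀ P, IsPt ρ (s.take k).toFinset P →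
      ∀ V ∈ P, s.getLast hsn ∉ V := fun k hk P hP V hV h =>
    lt_irrefl _ (take_drop_lt hs k _ (hP.2.1 V hV h) _ (getLast_mem_drop hsn hk))
  unfold SP
  simp_rw [Finset.sum_mul]
  rw [Finset.sum_sigma']
  symm
  refine Finset.sum_bij (fun x _ => insert (s.drop x.1).toFinset x.2) ?_ ?_ ?_ ?_
  · rintro ⟨k, P⟩ h
    simp only [Finset.mem_sigma, Finset.mem_range, Finset.mem_filter, Finset.mem_univ,
      true_and] at h ⊢
    rw [← take_union_drop s k]
    exact isPt_insert (take_drop_lt hs k) ⟨_, getLast_mem_drop hsn h.1⟩ h.2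
  · rintro ⟨k, P⟩ h ⟨k', P'⟩ h' heq
    simp only [Finset.mem_sigma, Finset.mem_range, Finset.mem_filter, Finset.mem_univ,
      true_and] at h h' heq
    have hD : (s.drop k).toFinset = (s.drop k').toFinset := by
      have : (s.drop k).toFinset ∈ insert (s.drop k').toFinset P' := by
        rw [← heq]; exact Finset.mem_insert_self _ _
      rcases Finset.mem_insert.1 this with h1 | h1
      · exact h1
      · exact (hlast k' h'.1 P' h'.2 _ h1 (getLast_mem_drop hsn h.1)).elim
    have hk : k = k' := by
      have := congrArg Finset.card hD
      rw [List.toFinset_card_of_nodup (hnd.sublist (List.drop_sublist _ _)),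
        List.toFinset_card_of_nodup (hnd.sublist (List.drop_sublist _ _)),
        List.length_drop, List.length_drop] at this
      omega
    subst hk
    have e1 : (s.drop k).toFinset ∉ P := fun h1 =>
      hlast k h.1 P h.2 _ h1 (getLast_mem_drop hsn h.1)
    have e2 : (s.drop k).toFinset ∉ P' := fun h1 =>
      hlast k h.1 P' h'.2 _ h1 (getLast_mem_drop hsn h.1)
    have : P = P' := by
      rw [← Finset.erase_insert e1, heq, Finset.erase_insert e2]
    rw [this]
  · intro Q hQ
    simp only [Finset.mem_filter, Finset.mem_univ, true_and] at hQ
    obtain ⟨V, hV, hlV⟩ := hQ.2.2.1 (s.getLast hsn) (by simp)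
    obtain ⟨k, hk, rfl⟩ := exists_drop hs hsn (hQ.2.1 V hV) hlV (hQ.2.2.2.2 V hV)
    refine ⟨⟨k, Q.erase (s.drop k).toFinset⟩, ?_, ?_⟩
    · simp only [Finset.mem_sigma, Finset.mem_range, Finset.mem_filter, Finset.mem_univ,
        true_and]
      refine ⟨hk, isPt_erase (take_drop_lt hs k) hV ?_⟩
      rwa [take_union_drop]
    · exact Finset.insert_erase hV
  · rintro ⟨k, P⟩ h
    simp only [Finset.mem_sigma, Finset.mem_range, Finset.mem_filter, Finset.mem_univ,
      true_and] at h ⊢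
    rw [Finset.prod_insert, mul_comm]
    exact fun h1 => hlast k h.1 P h.2 _ h1 (getLast_mem_drop hsn h.1)

lemma SP_empty (ρ : α → ℕ) (g : Finset α → ℂ) : SP ρ g ∅ = 1 := by
  unfold SP
  have : (Finset.univ.filter (fun P => IsPt ρ (∅ : Finset α) P)) = {∅} := by
    ext P
    simp only [Finset.mem_filter, Finset.mem_univ, true_and, Finset.mem_singleton]
    constructor
    · intro h
      rw [Finset.eq_empty_iff_forall_notMem]
      intro V hV
      have := Finset.subset_empty.1 (h.2.1 V hV)
      exact h.1 (this ▸ hV)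
    · rintro rfl
      simp [IsPt]
  rw [this]
  simp

/-- the recursion in the form used by the abstract part -/
lemma moment_rec {ρ : α → ℕ} (g : Finset α → ℂ) (hg : g ∅ = 1) {s : List α}
    (hs : s.Pairwise (fun i j => ρ i < ρ j)) (hsn : s ≠ []) :
    g s.toFinset = ∑ k ∈ Finset.range s.length,
      (- SP ρ g (s.take (k+1)).toFinset) * g (s.drop (k+1)).toFinset := by
  have h := SP_rec g hs hsn
  have e : ∑ k ∈ Finset.range (s.length + 1),
      SP ρ g (s.take k).toFinset * (- g (s.drop k).toFinset) = 0 := by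
    rw [Finset.sum_range_succ, ← h]
    simp [hg]
  rw [Finset.sum_range_succ'] at e
  simp only [List.take_zero, List.drop_zero, List.toFinset_nil, SP_empty] at e
  simp only [neg_mul, mul_neg] at e ⊢
  linear_combination -e

/-- Transport of `SP` along an embedding. -/
lemma SP_map {β : Type*} [Fintype β] [DecidableEq β] {ρ : α → ℕ} {ρ' : β → ℕ} (g : Finset α → ℂ)
    (g' : Finset β → ℂ) (e : β → α)
    (he : ∀ i j, ρ' i < ρ' j ↔ ρ (e i) < ρ (e j))
    (hgg : ∀ c : List β, g' c.toFinset = g (c.map e).toFinset) :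
    ∀ N (c : List β), c.length ≤ N → c.Pairwise (fun i j => ρ' i < ρ' j) →
      SP ρ' g' c.toFinset = SP ρ g (c.map e).toFinset := by
  intro N
  induction N with
  | zero =>
    intro c hc _
    have : c = [] := List.eq_nil_of_length_eq_zero (by omega)
    subst this
    simp [SP_empty]
  | succ N ih =>
    intro c hc hs
    by_cases hcn : c = []
    · subst hcn; simp [SP_empty]
    have hs' : (c.map e).Pairwise (fun i j => ρ i < ρ j) := by
      rw [List.pairwise_map]
      exact hs.imp fun h => (he _ _).1 h
    rw [SP_rec g' hs hcn, SP_rec g hs' (by simpa using hcn), List.length_map]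
    refine Finset.sum_congr rfl fun k hk => ?_
    have hk := Finset.mem_range.1 hk
    rw [ih _ (by rw [List.length_take_of_le (by omega)]; omega)
      (hs.sublist (List.take_sublist _ _)), hgg, List.map_take, List.map_drop]

end partPart
section connect

lemma chiRank_injective {n : ℕ} (χ : Fin n → Bool) : Function.Injective (chiRank χ) := by
  intro i j h
  have hi := i.2
  have hj := j.2
  unfold chiRank at h
  ext
  split_ifs at h <;> omega

lemma chiSorted_perm {n : ℕ} (χ : Fin n → Bool) : (chiSorted χ).Perm (List.finRange n) :=
  List.mergeSort_perm _ _

lemma chiSorted_pairwise {n : ℕ} (χ : Fin n → Bool) :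
    (chiSorted χ).Pairwise (fun i j => chiRank χ i < chiRank χ j) := by
  have h1 : (chiSorted χ).Pairwise
      (fun i j => decide (chiRank χ i ≤ chiRank χ j) = true) := by
    apply List.pairwise_mergeSort
    · intro a b c; simp only [decide_eq_true_eq]; exact le_trans
    · intro a b; simp only [Bool.or_eq_true, decide_eq_true_eq]; exact le_total _ _
  have h2 : (chiSorted χ).Nodup := (chiSorted_perm χ).nodup_iff.2 (List.nodup_finRange n)
  refine (h1.and h2).imp ?_
  rintro i j ⟨h, hne⟩
  simp only [decide_eq_true_eq] at h
  exact lt_of_le_of_ne h (fun e => hne (chiRank_injective χ e))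

lemma chiSorted_toFinset {n : ℕ} (χ : Fin n → Bool) : (chiSorted χ).toFinset = Finset.univ := by
  ext i
  simp [(chiSorted_perm χ).mem_iff]

lemma Zword_eq {n : ℕ} (w : Fin n → Letter) : Zword w = ZwordOn w Finset.univ := by
  unfold Zword ZwordOn
  rw [Fin.sort_univ, List.ofFn_eq_map]

lemma ZwordOn_map {n k : ℕ} (w : Fin n → Letter) (e : Fin k ↪o Fin n) (c : List (Fin k)) :
    ZwordOn (fun i => w (e i)) c.toFinset = ZwordOn w (c.map e).toFinset := by
  unfold ZwordOn
  have h1 : (c.map e).toFinset = c.toFinset.map e.toEmbedding := by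
    ext i; simp
  rw [h1, ← Finset.map_sort e.toEmbedding c.toFinset (· ≤ ·) (· ≤ ·) (by simp), List.map_map]
  rfl

lemma chiRank_map {n k : ℕ} (w : Fin n → Letter) (e : Fin k ↪o Fin n) (i j : Fin k) :
    chiRank (chiW (fun i => w (e i))) i < chiRank (chiW (fun i => w (e i))) j ↔
      chiRank (chiW w) (e i) < chiRank (chiW w) (e j) := by
  have h : (e i : ℕ) < (e j : ℕ) ↔ (i : ℕ) < j := by
    rw [← Fin.lt_def, ← Fin.lt_def]; exact e.lt_iff_lt
  have h' : (e j : ℕ) < (e i : ℕ) ↔ (j : ℕ) < i := by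
    rw [← Fin.lt_def, ← Fin.lt_def]; exact e.lt_iff_lt
  have h1 := i.2
  have h2 := j.2
  have h3 := (e i).2
  have h4 := (e j).2
  unfold chiRank chiW
  dsimp only
  split_ifs <;> omega

lemma IsPt_univ {n : ℕ} (χ : Fin n → Bool) (P : Finset (Finset (Fin n))) :
    (IsPartition P ∧ ∀ V ∈ P, IsChiInterval χ V) ↔ IsPt (chiRank χ) Finset.univ P := by
  unfold IsPartition IsChiInterval chiLT IsPt
  constructor
  · rintro ⟨⟨h1, h2⟩, h3⟩
    refine ⟨h1, fun V _ => Finset.subset_univ V, ?_, ?_, ?_⟩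
    · intro i _
      obtain ⟨V, hV, -⟩ := h2 i
      exact ⟨V, hV.1, hV.2⟩
    · intro V hV V' hV' i hi hi'
      exact (h2 i).unique ⟨hV, hi⟩ ⟨hV', hi'⟩
    · intro V hV i j k hi hk _
      exact h3 V hV i j k hi hk
  · rintro ⟨h1, -, h3, h4, h5⟩
    refine ⟨⟨h1, ?_⟩, ?_⟩
    · intro i
      obtain ⟨V, hV, hi⟩ := h3 i (Finset.mem_univ _)
      exact ⟨V, ⟨hV, hi⟩, fun V' h => h4 _ h.1 _ hV i h.2 hi⟩
    · intro V hV i j k hi hk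
      exact h5 V hV i j k hi hk (Finset.mem_univ _)

lemma BcumW_eq (μ : FreeAlgebra ℂ Letter →ₗ[ℂ] ℂ) {n : ℕ} (hn : 1 ≤ n) (w : Fin n → Letter) :
    BcumW (fun z => μ z) w =
      - SP (chiRank (chiW w)) (fun V => μ (ZwordOn w V)) Finset.univ := by
  unfold BcumW Bcum SP BIset
  rw [← Finset.sum_neg_distrib]
  refine Finset.sum_congr ?_ ?_
  · ext P
    simp only [Finset.mem_filter, Finset.mem_univ, true_and]
    exact IsPt_univ _ P
  · intro P hP
    simp only [Finset.mem_filter, Finset.mem_univ, true_and] at hP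
    obtain ⟨V, hV, -⟩ := hP.2.2.1 ⟨0, hn⟩ (Finset.mem_univ _)
    have hc : 0 < P.card := Finset.card_pos.2 ⟨V, hV⟩
    obtain ⟨m, hm⟩ : ∃ m, P.card = m + 1 := ⟨P.card - 1, by omega⟩
    rw [Finset.prod_neg, hm, pow_succ]
    simp [phiV, ZwordOn]

lemma prs_map {α β : Type*} (st : α → Bool) (e : β → α) :
    ∀ s : List β, Prs (fun i => st (e i)) s ↔ Prs st (s.map e)
  | [] => Iff.rfl
  | [_] => Iff.rfl
  | x :: y :: t => by
    simp only [List.map_cons, Prs, prs_map st e t]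

/-- Subword data attached to a `χ`-sorted list of positions. -/
lemma exists_subword {n : ℕ} (w : Fin n → Letter) (c : List (Fin n))
    (hc : c.Pairwise (fun i j => chiRank (chiW w) i < chiRank (chiW w) j)) :
    ∃ e : Fin c.length ↪o Fin n, (chiSorted (chiW (fun i => w (e i)))).map e = c := by
  have hnd : c.Nodup := hc.imp (fun h e => by subst e; exact lt_irrefl _ h)
  have hcard : c.toFinset.card = c.length := List.toFinset_card_of_nodup hnd
  refine ⟨c.toFinset.orderEmbOfFin hcard, ?_⟩
  set e := c.toFinset.orderEmbOfFin hcard with he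
  have hs : ((chiSorted (chiW (fun i => w (e i)))).map e).Pairwise
      (fun i j => chiRank (chiW w) i < chiRank (chiW w) j) := by
    rw [List.pairwise_map]
    exact (chiSorted_pairwise _).imp fun h => (chiRank_map w e _ _).1 h
  refine List.Perm.eq_of_pairwise ?_ hs hc ?_
  · intro a b _ _ h h'
    exact (lt_asymm h h').elim
  · rw [List.perm_ext_iff_of_nodup (hs.imp (fun h e => by subst e; exact lt_irrefl _ h)) hnd]
    intro a
    have h1 : a ∈ Set.range e ↔ a ∈ (c.toFinset : Set (Fin n)) := by
      rw [he, Finset.range_orderEmbOfFin]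
    simp only [Set.mem_range, Finset.mem_coe, List.mem_toFinset] at h1
    rw [← h1]
    simp [(chiSorted_perm _).mem_iff]

lemma flatten_map_lift {α β : Type*} (e : β → α) (he : Function.Injective e)
    (L : List (List α)) (s : List β) (h : s.map e = L.flatten) :
    ∃ L' : List (List β), L'.map (List.map e) = L ∧ L'.flatten = s := by
  induction L generalizing s with
  | nil => exact ⟨[], rfl, by simpa using h.symm⟩
  | cons c cs ih =>
    rw [List.flatten_cons, List.map_eq_append_iff] at h
    obtain ⟨l₁, l₂, rfl, rfl, h2⟩ := h
    obtain ⟨L', rfl, rfl⟩ := ih l₂ h2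
    exact ⟨l₁ :: L', by simp, by simp⟩

end connect
/-- A `*`-distribution is η-diagonal iff (i) its moments vanish at every word that is not
mixed alternating, and (ii) its moments factorize along the canonical factorization of
every mixed alternating word. -/
theorem etaDiagonal_iff_moments
    (μ : FreeAlgebra ℂ Letter →ₗ[ℂ] ℂ) (hμ1 : μ 1 = 1) :
    EtaDiagonalDist (fun z => μ z) ↔
      ((∀ n : ℕ, 1 ≤ n → ∀ w : Fin n → Letter, ¬ MixedAlternatingW w → μ (Zword w) = 0) ∧
       (∀ n : ℕ, 1 ≤ n → ∀ w : Fin n → Letter, ∀ chunks : List (List (Fin n)),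
         IsCanonFact w chunks →
           μ (Zword w) = (chunks.map (fun c => μ (ZwordOn w c.toFinset))).prod)) := by
  have hf0 : ∀ {n : ℕ} (w : Fin n → Letter), μ (ZwordOn w ∅) = 1 := by
    intro n w
    simp [ZwordOn, hμ1]
  have hGs : ∀ {n : ℕ} (w : Fin n → Letter) (s s' : List (Fin n)), s'.Sublist s →
      s.Pairwise (fun i j => chiRank (chiW w) i < chiRank (chiW w) j) →
      s'.Pairwise (fun i j => chiRank (chiW w) i < chiRank (chiW w) j) :=
    fun w s s' h h' => h'.sublist h
  have hrec : ∀ {n : ℕ} (w : Fin n → Letter) (s : List (Fin n)),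
      s.Pairwise (fun i j => chiRank (chiW w) i < chiRank (chiW w) j) → s ≠ [] →
      μ (ZwordOn w s.toFinset) = ∑ k ∈ Finset.range s.length,
        (- SP (chiRank (chiW w)) (fun V => μ (ZwordOn w V)) (s.take (k+1)).toFinset) *
          μ (ZwordOn w (s.drop (k+1)).toFinset) :=
    fun w s h hn => moment_rec (fun V => μ (ZwordOn w V)) (hf0 w) h hn
  have halt : ∀ {n : ℕ} (w : Fin n → Letter) (c : List (Fin n)) (e : Fin c.length ↪o Fin n),
      (chiSorted (chiW (fun i => w (e i)))).map e = c →
      (AlternatingW (fun i => w (e i)) ↔ AltL (fun i => (w i).2) c) := by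
    intro n w c e he
    unfold AlternatingW AltL wordStarSeq
    conv_rhs => rw [← he]
    rw [List.map_map, List.length_map, (chiSorted_perm _).length_eq, List.length_finRange]
    rfl
  have hcum : ∀ {n : ℕ} (w : Fin n → Letter) (c : List (Fin n)) (e : Fin c.length ↪o Fin n),
      c ≠ [] → (chiSorted (chiW (fun i => w (e i)))).map e = c →
      BcumW (fun z => μ z) (fun i => w (e i)) =
        - SP (chiRank (chiW w)) (fun V => μ (ZwordOn w V)) c.toFinset := by
    intro n w c e hc he
    rw [BcumW_eq μ (List.length_pos_iff.2 hc), ← chiSorted_toFinset (chiW (fun i => w (e i))),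
      SP_map (fun V => μ (ZwordOn w V)) _ e (chiRank_map w e)
        (fun c => congrArg μ (ZwordOn_map w e c)) _ _ le_rfl (chiSorted_pairwise _), he]
  have hmom : ∀ {n : ℕ} (w : Fin n → Letter) (c : List (Fin n)) (e : Fin c.length ↪o Fin n),
      (chiSorted (chiW (fun i => w (e i)))).map e = c →
      Zword (fun i => w (e i)) = ZwordOn w c.toFinset := by
    intro n w c e he
    rw [Zword_eq, ← chiSorted_toFinset (chiW (fun i => w (e i))), ZwordOn_map, he]
  have hne : ∀ {n : ℕ} (w : Fin n → Letter), 1 ≤ n → chiSorted (chiW w) ≠ [] := by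
    intro n w hn h
    have := (chiSorted_perm (chiW w)).length_eq
    rw [h, List.length_finRange] at this
    simp at this
    omega
  constructor
  · intro hη
    have hb : ∀ {n : ℕ} (w : Fin n → Letter) (c : List (Fin n)),
        c.Pairwise (fun i j => chiRank (chiW w) i < chiRank (chiW w) j) → c ≠ [] →
        ¬ AltL (fun i => (w i).2) c →
        - SP (chiRank (chiW w)) (fun V => μ (ZwordOn w V)) c.toFinset = 0 := by
      intro n w c hc hcn hA
      obtain ⟨e, he⟩ := exists_subword w c hc
      rw [← hcum w c e hcn he]
      exact hη _ (List.length_pos_iff.2 hcn) _ (fun h => hA ((halt w c e he).1 h))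
    refine ⟨?_, ?_⟩
    · intro n hn w hM
      rw [Zword_eq, ← chiSorted_toFinset (chiW w)]
      refine fwd_zero (f := fun c => μ (ZwordOn w c.toFinset))
        (b := fun c => - SP (chiRank (chiW w)) (fun V => μ (ZwordOn w V)) c.toFinset)
        (hGs w) (hrec w) (hb w) _ _ le_rfl (chiSorted_pairwise _) ?_
      intro hP
      obtain ⟨L, hL, hL'⟩ := prs_canon hP
      exact hM ⟨L, hL, hL'⟩
    · intro n hn w L hL
      rw [Zword_eq, ← chiSorted_toFinset (chiW w), ← hL.1]
      refine fwd_fact (f := fun c => μ (ZwordOn w c.toFinset))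
        (b := fun c => - SP (chiRank (chiW w)) (fun V => μ (ZwordOn w V)) c.toFinset)
        (hGs w) (by simpa using hf0 w) (hrec w) (hb w) L hL.2 ?_
      rw [hL.1]
      exact chiSorted_pairwise _
  · rintro ⟨h1, h2⟩ n hn w hA
    rw [BcumW_eq μ hn, ← chiSorted_toFinset (chiW w)]
    refine bwd (st := fun i => (w i).2) (f := fun c => μ (ZwordOn w c.toFinset))
      (b := fun c => - SP (chiRank (chiW w)) (fun V => μ (ZwordOn w V)) c.toFinset)
      (hGs w) (by simpa using hf0 w) (hrec w) ?_ ?_ _ _ le_rfl (chiSorted_pairwise _)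
      (hne w hn) ?_
    · intro c hc hP
      have hcn : c ≠ [] := by rintro rfl; exact hP trivial
      obtain ⟨e, he⟩ := exists_subword w c hc
      rw [← hmom w c e he]
      refine h1 _ (List.length_pos_iff.2 hcn) _ ?_
      rintro ⟨L, hL, hL', -⟩
      apply hP
      rw [← he, ← prs_map, ← hL]
      exact canon_prs fun c hc => (hL' c hc).2
    · intro L hL hG
      by_cases hcn : L.flatten = []
      · cases L with
        | nil => simpa using hf0 w
        | cons c cs =>
          have := (hL.1 c (by simp)).1
          simp [this] at hcn
      obtain ⟨e, he⟩ := exists_subword w L.flatten hG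
      rw [← hmom w _ e he]
      obtain ⟨L', hLL, hfl⟩ := flatten_map_lift e e.injective L _ he
      rw [h2 _ (List.length_pos_iff.2 hcn) _ L' ⟨hfl, ?_, ?_⟩]
      · conv_rhs => rw [← hLL]
        rw [List.map_map]
        congr 1
        refine List.map_congr_left fun c _ => ?_
        exact congrArg μ (ZwordOn_map w e c)
      · intro c hc
        have := hL.1 (c.map e) 
          ((congrArg (fun M => c.map e ∈ M) hLL).mp (List.mem_map_of_mem hc))
        rw [List.map_map, List.length_map] at this
        exact ⟨by simpa using this.1, this.2⟩
      · have := hL.2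
        rw [← hLL, List.isChain_map] at this
        simp only [List.map_map] at this
        exact this
    · intro h
      apply hA
      refine ⟨?_, h.2⟩
      have := h.1
      rwa [(chiSorted_perm _).length_eq, List.length_finRange] at this
end

section
/- Let (x, y) be an η-diagonal pair in a *-probability space (A, φ). Fix n ≥ 1 and χ : {1,…,n} → {l,r}, and let χ̂ : {1,…,2n} → {l,r} be defined by χ̂(2k−1) = χ̂(2k) = χ(k). Put a_k = xx* if χ(k) = l and a_k = yy* if χ(k) = r, and put b_k = x*x if χ(k) = l and b_k = y*y if χ(k) = r. Then: (i) if χ is not constant, B_χ(a₁,…,aₙ) = 0 and B_χ(b₁,…,bₙ) = 0; (ii) if χ is constantly l, then B_χ(a₁,…,aₙ) = B_{χ̂}(x, x*, x, x*, …, x, x*) and B_χ(b₁,…,bₙ) = B_{χ̂}(x*, x, …, x*, x); (iii) if χ is constantly r, then B_χ(a₁,…,aₙ) = B_{χ̂}(y, y*, …, y, y*) and B_χ(b₁,…,bₙ) = B_{χ̂}(y*, y, …, y*, y), where in each case the 2n arguments of B_{χ̂} are listed in the original index order. (Since χ̂ is constant in cases (ii) and (iii), B_{χ̂} is the ordinary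 Boolean cumulant, the signed sum over interval partitions of {1,…,2n}.) In particular, the bi-Boolean η-series of the pairs (xx*, yy*) and (x*x, y*y) are diagonal. -/
open scoped BigOperators

/-- The element of the pair `(x, y)` selected by side (`true` = `x`-side) and
star-parity (`true` = starred). -/
def pairElem {A : Type*} [Monoid A] [StarMul A] (x y : A) : Bool → Bool → A
  | true, false => x
  | true, true => star x
  | false, false => y
  | false, true => star y

/-- A pair `(x, y)` in a `*`-probability space is η-diagonal: every Boolean
(l,r)-cumulant with entries from `{x, x*}` at left positions and `{y, y*}` at right
positions vanishes unless `n` is even and, in the `≺_χ`-rearranged tuple, the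
star-parities alternate (entries from `{x, x*}` automatically precede those from
`{y, y*}`). -/
def EtaDiagonalPair {A : Type*} [Monoid A] [StarMul A] (φ : A → ℂ) (x y : A) : Prop :=
  ∀ n : ℕ, 1 ≤ n → ∀ χ ε : Fin n → Bool,
    ¬ (Even n ∧ ((chiSorted χ).map ε).Chain' (· ≠ ·)) →
    Bcum φ χ (fun i => pairElem x y (χ i) (ε i)) = 0

/-- The doubling `χ̂` of `χ`. -/
def hatChi {n : ℕ} (χ : Fin n → Bool) : Fin (2 * n) → Bool :=
  fun i => χ ⟨i.val / 2, by omega⟩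

namespace EtaAux

def IsInit {ι : Type*} (r : ι → ℕ) (S U : Finset ι) : Prop :=
  ∀ i ∈ S, ∀ j ∈ U, r i < r j → i ∈ U

open scoped Classical in
noncomputable def Init {ι : Type*} (r : ι → ℕ) (S : Finset ι) : Finset (Finset ι) :=
  S.powerset.filter (IsInit r S)

lemma mem_Init {ι : Type*} {r : ι → ℕ} {S U : Finset ι} :
    U ∈ Init r S ↔ U ⊆ S ∧ IsInit r S U := by
  simp [Init]

def Good {ι : Type*} (r : ι → ℕ) (S : Finset ι) (P : Finset (Finset ι)) : Prop :=
  (∀ V ∈ P, V ⊆ S) ∧ ∅ ∉ P ∧ (∀ i ∈ S, ∃! V : Finset ι, V ∈ P ∧ i ∈ V) ∧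
    ∀ V ∈ P, ∀ i j k : ι, i ∈ V → k ∈ V → j ∈ S → r i < r j → r j < r k → j ∈ V

open scoped Classical in
noncomputable def BI {ι : Type*} (r : ι → ℕ) (S : Finset ι) : Finset (Finset (Finset ι)) :=
  S.powerset.powerset.filter (Good r S)

lemma mem_BI {ι : Type*} {r : ι → ℕ} {S : Finset ι} {P : Finset (Finset ι)} :
    P ∈ BI r S ↔ Good r S P := by
  simp only [BI, Finset.mem_filter, Finset.mem_powerset, and_iff_right_iff_imp]
  intro h V hV
  exact Finset.mem_powerset.2 (h.1 V hV)

noncomputable def W {ι : Type*} (r : ι → ℕ) (m : Finset ι → ℂ) (S : Finset ι) : ℂ :=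
  ∑ P ∈ BI r S, (-1 : ℂ) ^ P.card * ∏ V ∈ P, m V

lemma W_empty {ι : Type*} (r : ι → ℕ) (m : Finset ι → ℂ) : W r m ∅ = 1 := by
  have : BI r ∅ = {∅} := by
    ext P
    rw [mem_BI, Finset.mem_singleton]
    constructor
    · intro h
      rw [Finset.eq_empty_iff_forall_notMem]
      intro V hV
      have := Finset.subset_empty.1 (h.1 V hV)
      subst this
      exact h.2.1 hV
    · rintro rfl
      simp [Good]
  simp [W, this]

lemma good_insert {ι : Type*} [DecidableEq ι] {r : ι → ℕ} {S U : Finset ι}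
    {Q : Finset (Finset ι)} (hUS : U ⊆ S) (hne : U ≠ S) (hU : IsInit r S U) (hQ : Good r U Q) :
    Good r S (insert (S \ U) Q) := by
  obtain ⟨h1, h2, h3, h4⟩ := hQ
  refine ⟨?_, ?_, ?_, ?_⟩
  · intro V hV
    rcases Finset.mem_insert.1 hV with rfl | hV
    · exact Finset.sdiff_subset
    · exact (h1 V hV).trans hUS
  · intro h
    rcases Finset.mem_insert.1 h with h | h
    · exact hne (hUS.antisymm (Finset.sdiff_eq_empty_iff_subset.1 h.symm))
    · exact h2 h
  · intro i hi
    by_cases hiU : i ∈ U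
    · obtain ⟨V, ⟨hV, hiV⟩, hu⟩ := h3 i hiU
      refine ⟨V, ⟨Finset.mem_insert_of_mem hV, hiV⟩, ?_⟩
      rintro V' ⟨hV', hi'⟩
      rcases Finset.mem_insert.1 hV' with rfl | hV'
      · exact absurd hiU (Finset.mem_sdiff.1 hi').2
      · exact hu V' ⟨hV', hi'⟩
    · refine ⟨S \ U, ⟨Finset.mem_insert_self _ _, Finset.mem_sdiff.2 ⟨hi, hiU⟩⟩, ?_⟩
      rintro V' ⟨hV', hi'⟩
      rcases Finset.mem_insert.1 hV' with rfl | hV'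
      · rfl
      · exact absurd (h1 V' hV' hi') hiU
  · intro V hV i j k hi hk hj hij hjk
    rcases Finset.mem_insert.1 hV with rfl | hV
    · refine Finset.mem_sdiff.2 ⟨hj, fun hjU => ?_⟩
      have hi' := Finset.mem_sdiff.1 hi
      exact hi'.2 (hU i hi'.1 j hjU hij)
    · exact h4 V hV i j k hi hk (hU j hj k (h1 V hV hk) hjk) hij hjk

lemma good_erase {ι : Type*} [DecidableEq ι] {r : ι → ℕ} (hr : Function.Injective r) {S V : Finset ι}
    {P : Finset (Finset ι)} (hP : Good r S P) (hV : V ∈ P) {t : ι} (htV : t ∈ V)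
    (ht : ∀ i ∈ S, r i ≤ r t) :
    Good r (S \ V) (P.erase V) ∧ IsInit r S (S \ V) := by
  obtain ⟨h1, h2, h3, h4⟩ := hP
  refine ⟨⟨?_, ?_, ?_, ?_⟩, ?_⟩
  · intro V' hV' i hi
    have hV'' := Finset.mem_erase.1 hV'
    have hiS := h1 V' hV''.2 hi
    refine Finset.mem_sdiff.2 ⟨hiS, fun hiV => hV''.1 ?_⟩
    exact (h3 i hiS).unique ⟨hV''.2, hi⟩ ⟨hV, hiV⟩
  · intro h
    exact h2 (Finset.mem_of_mem_erase h)
  · intro i hi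
    obtain ⟨hiS, hiV⟩ := Finset.mem_sdiff.1 hi
    obtain ⟨V', ⟨hV', hi'⟩, hu⟩ := h3 i hiS
    refine ⟨V', ⟨Finset.mem_erase.2 ⟨?_, hV'⟩, hi'⟩, ?_⟩
    · rintro rfl
      exact hiV hi'
    · rintro V'' ⟨hV'', hi''⟩
      exact hu V'' ⟨Finset.mem_of_mem_erase hV'', hi''⟩
  · intro V' hV' i j k hi hk hj hij hjk
    exact h4 V' (Finset.mem_of_mem_erase hV') i j k hi hk (Finset.mem_sdiff.1 hj).1 hij hjk
  · intro i hi j hj hij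
    obtain ⟨hjS, hjV⟩ := Finset.mem_sdiff.1 hj
    refine Finset.mem_sdiff.2 ⟨hi, fun hiV => hjV ?_⟩
    have hjt : r j ≠ r t := fun h => hjV (hr h ▸ htV)
    exact h4 V hV i j t hiV htV hjS hij (lt_of_le_of_ne (ht j hjS) hjt)

lemma W_rec {ι : Type*} [DecidableEq ι] {r : ι → ℕ} (hr : Function.Injective r)
    (m : Finset ι → ℂ) {S : Finset ι} (hS : S.Nonempty) :
    W r m S = - ∑ U ∈ (Init r S).erase S, W r m U * m (S \ U) := by
  obtain ⟨t, htS, ht⟩ := S.exists_max_image r hS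
  simp only [W, Finset.sum_mul]
  rw [Finset.sum_sigma', ← Finset.sum_neg_distrib]
  symm
  refine Finset.sum_bij (fun x _ => insert (S \ x.1) x.2) ?_ ?_ ?_ ?_
  · rintro ⟨U, Q⟩ h
    simp only [Finset.mem_sigma, Finset.mem_erase, mem_Init, mem_BI] at h ⊢
    exact good_insert h.1.2.1 h.1.1 h.1.2.2 h.2
  · rintro ⟨U, Q⟩ h ⟨U', Q'⟩ h' heq
    simp only [Finset.mem_sigma, Finset.mem_erase, mem_Init, mem_BI] at h h' heq
    have key : ∀ U Q, (U ≠ S ∧ U ⊆ S ∧ IsInit r S U) ∧ Good r U Q → t ∈ S \ U ∧ S \ U ∉ Q := by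
      rintro U Q ⟨⟨a, b, c⟩, d⟩
      have htU : t ∉ U := by
        intro htU
        apply a
        refine b.antisymm fun i hi => ?_
        rcases (ht i hi).lt_or_eq with hlt | he
        · exact c i hi t htU hlt
        · exact hr he ▸ htU
      have := Finset.mem_sdiff.2 ⟨htS, htU⟩
      exact ⟨this, fun hq => htU (d.1 _ hq this)⟩
    have k := key _ _ h
    have k' := key _ _ h'
    have hg := good_insert h.1.2.1 h.1.1 h.1.2.2 h.2
    have e : S \ U = S \ U' := (hg.2.2.1 t htS).unique ⟨Finset.mem_insert_self _ _, k.1⟩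
      ⟨heq ▸ Finset.mem_insert_self _ _, k'.1⟩
    have eU : U = U' := by
      rw [← Finset.sdiff_sdiff_eq_self h.1.2.1, e, Finset.sdiff_sdiff_eq_self h'.1.2.1]
    subst eU
    have : Q = Q' := by
      rw [← Finset.erase_insert k.2, heq, Finset.erase_insert k'.2]
    rw [this]
  · intro P hP
    rw [mem_BI] at hP
    obtain ⟨V, ⟨hV, htV⟩, -⟩ := hP.2.2.1 t htS
    obtain ⟨a, b⟩ := good_erase hr hP hV htV ht
    refine ⟨⟨S \ V, P.erase V⟩, ?_, ?_⟩
    · simp only [Finset.mem_sigma, Finset.mem_erase, mem_Init, mem_BI]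
      refine ⟨⟨?_, Finset.sdiff_subset, b⟩, a⟩
      intro h
      have := h ▸ htS
      exact (Finset.mem_sdiff.1 this).2 htV
    · simp only
      rw [Finset.sdiff_sdiff_eq_self (hP.1 V hV), Finset.insert_erase hV]
  · rintro ⟨U, Q⟩ h
    simp only [Finset.mem_sigma, Finset.mem_erase, mem_Init, mem_BI] at h ⊢
    have : S \ U ∉ Q := by
      intro hq
      have hs := h.2.1 _ hq
      have : (S \ U).Nonempty := by
        rw [Finset.sdiff_nonempty]
        exact fun hh => h.1.1 (h.1.2.1.antisymm hh)
      obtain ⟨i, hi⟩ := this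
      exact (Finset.mem_sdiff.1 hi).2 (hs hi)
    rw [Finset.prod_insert this, Finset.card_insert_of_notMem this]
    ring

lemma self_mem_Init {ι : Type*} (r : ι → ℕ) (S : Finset ι) : S ∈ Init r S :=
  mem_Init.2 ⟨subset_rfl, fun _ hi _ _ _ => hi⟩

lemma empty_mem_Init {ι : Type*} (r : ι → ℕ) (S : Finset ι) : ∅ ∈ Init r S :=
  mem_Init.2 ⟨Finset.empty_subset _, fun i hi j hj _ => by simp at hj⟩

lemma W_sum {ι : Type*} [DecidableEq ι] {r : ι → ℕ} (hr : Function.Injective r)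
    (m : Finset ι → ℂ) (hm : m ∅ = 1) {S : Finset ι} (hS : S.Nonempty) :
    ∑ U ∈ Init r S, W r m U * m (S \ U) = 0 := by
  rw [← Finset.add_sum_erase _ _ (self_mem_Init r S)]
  rw [W_rec hr m hS]
  simp [hm]

lemma init_inter {ι : Type*} [DecidableEq ι] {r : ι → ℕ} {L S : Finset ι}
    (hL : ∀ i ∈ L, ∀ j ∉ L, r i < r j) {U : Finset ι} :
    U ∈ Init r (S ∩ L) ↔ U ∈ Init r S ∧ U ⊆ L := by
  simp only [mem_Init]
  constructor
  · rintro ⟨a, b⟩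
    refine ⟨⟨a.trans Finset.inter_subset_left, ?_⟩, a.trans Finset.inter_subset_right⟩
    intro i hi j hj hij
    refine b i (Finset.mem_inter.2 ⟨hi, ?_⟩) j hj hij
    by_contra h
    have := hL j (Finset.mem_inter.1 (a hj)).2 i h
    omega
  · rintro ⟨⟨a, b⟩, c⟩
    exact ⟨Finset.subset_inter a c, fun i hi j hj hij => b i (Finset.mem_inter.1 hi).1 j hj hij⟩

lemma init_cross {ι : Type*} [DecidableEq ι] {r : ι → ℕ} {L S : Finset ι}
    (hL : ∀ i ∈ L, ∀ j ∉ L, r i < r j) {U : Finset ι} (hU : U ∈ Init r S) (h : ¬ U ⊆ L) :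
    S ∩ L ⊆ U ∧ (U \ L).Nonempty := by
  rw [mem_Init] at hU
  obtain ⟨j, hj, hjL⟩ := Finset.not_subset.1 h
  refine ⟨fun i hi => ?_, ⟨j, Finset.mem_sdiff.2 ⟨hj, hjL⟩⟩⟩
  have := Finset.mem_inter.1 hi
  exact hU.2 i this.1 j hj (hL i this.2 j hjL)

lemma factor {ι : Type*} [DecidableEq ι] {r : ι → ℕ} (hr : Function.Injective r)
    (m : Finset ι → ℂ) (hm : m ∅ = 1) {L : Finset ι} (hL : ∀ i ∈ L, ∀ j ∉ L, r i < r j)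
    (G : Finset ι → Prop)
    (hG1 : ∀ S U, G S → U ∈ Init r S → ¬ U ⊆ L → G U)
    (hG2 : ∀ S U, G S → U ∈ Init r S → U ⊆ L → G (S \ U))
    (hW : ∀ S, G S → (S ∩ L).Nonempty → (S \ L).Nonempty → W r m S = 0)
    (S : Finset ι) (hS : G S) : m S = m (S ∩ L) * m (S \ L) := by
  induction S using Finset.strongInduction with
  | H S ih =>
  rcases (S ∩ L).eq_empty_or_nonempty with h0 | hne
  · have : S \ L = S := Finset.sdiff_eq_self_of_disjoint (Finset.disjoint_iff_inter_eq_empty.2 h0)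
    rw [h0, this, hm, one_mul]
  have e1 := W_sum hr m hm (hne.mono Finset.inter_subset_left)
  have e2 := W_sum hr m hm hne
  have hsub : Init r (S ∩ L) ⊆ Init r S := fun U hU => ((init_inter hL).1 hU).1
  rw [← Finset.sum_subset hsub] at e1
  · have e3 : ∑ U ∈ Init r (S ∩ L), W r m U *
        (m (S \ U) - m ((S ∩ L) \ U) * m (S \ L)) = 0 := by
      have : ∑ U ∈ Init r (S ∩ L), W r m U * (m (S \ U) - m ((S ∩ L) \ U) * m (S \ L))
          = ∑ U ∈ Init r (S ∩ L), W r m U * m (S \ U)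
            - (∑ U ∈ Init r (S ∩ L), W r m U * m ((S ∩ L) \ U)) * m (S \ L) := by
        rw [Finset.sum_mul, ← Finset.sum_sub_distrib]
        refine Finset.sum_congr rfl fun U _ => by ring
      rw [this, e1, e2]; simp
    rw [Finset.sum_eq_single_of_mem ∅ (empty_mem_Init _ _)] at e3
    · simp only [W_empty, Finset.sdiff_empty, one_mul] at e3
      exact sub_eq_zero.1 e3
    · intro U hU hU0
      obtain ⟨hUS, hUL⟩ := (init_inter hL).1 hU
      have hUs := (mem_Init.1 hUS).1
      have hlt : S \ U ⊂ S := Finset.sdiff_ssubset hUs (Finset.nonempty_iff_ne_empty.2 hU0)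
      have := ih _ hlt (hG2 S U hS hUS hUL)
      have a1 : (S \ U) ∩ L = (S ∩ L) \ U := by ext; simp; tauto
      have a2 : (S \ U) \ L = S \ L := by
        ext i
        simp only [Finset.mem_sdiff]
        have := @hUL i
        tauto
      rw [a1, a2] at this
      rw [this]; ring
  · intro U hU hU'
    have hUL : ¬ U ⊆ L := fun h => hU' ((init_inter hL).2 ⟨hU, h⟩)
    obtain ⟨c1, c2⟩ := init_cross hL hU hUL
    rw [hW U (hG1 S U hS hU hUL) ?_ c2, zero_mul]
    exact hne.mono (Finset.subset_inter c1 Finset.inter_subset_right)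

lemma vanish {ι : Type*} [DecidableEq ι] {r : ι → ℕ} (hr : Function.Injective r)
    (m : Finset ι → ℂ) (hm : m ∅ = 1) {L : Finset ι} (hL : ∀ i ∈ L, ∀ j ∉ L, r i < r j)
    (hf : ∀ S, m S = m (S ∩ L) * m (S \ L))
    (S : Finset ι) (h1 : (S ∩ L).Nonempty) (h2 : (S \ L).Nonempty) : W r m S = 0 := by
  induction S using Finset.strongInduction with
  | H S ih =>
  have e1 := W_sum hr m hm (h1.mono Finset.inter_subset_left)
  have e2 := W_sum hr m hm h1
  have hsub : Init r (S ∩ L) ⊆ (Init r S).erase S := by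
    intro U hU
    have := (init_inter hL).1 hU
    refine Finset.mem_erase.2 ⟨?_, this.1⟩
    rintro rfl
    rw [Finset.sdiff_nonempty] at h2
    exact h2 this.2
  rw [← Finset.add_sum_erase _ _ (self_mem_Init r S), ← Finset.sum_subset hsub] at e1
  · have : ∑ U ∈ Init r (S ∩ L), W r m U * m (S \ U)
        = (∑ U ∈ Init r (S ∩ L), W r m U * m ((S ∩ L) \ U)) * m (S \ L) := by
      rw [Finset.sum_mul]
      refine Finset.sum_congr rfl fun U hU => ?_
      have hUL := ((init_inter hL).1 hU).2
      have a1 : (S \ U) ∩ L = (S ∩ L) \ U := by ext; simp; tauto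
      have a2 : (S \ U) \ L = S \ L := by
        ext i
        simp only [Finset.mem_sdiff]
        have := @hUL i
        tauto
      rw [hf (S \ U), a1, a2]; ring
    rw [this, e2] at e1
    simpa [hm] using e1
  · intro U hU hU'
    obtain ⟨hne, hU⟩ := Finset.mem_erase.1 hU
    have hUL : ¬ U ⊆ L := fun h => hU' ((init_inter hL).2 ⟨hU, h⟩)
    obtain ⟨c1, c2⟩ := init_cross hL hU hUL
    have hUs := (mem_Init.1 hU).1
    rw [ih U (Finset.ssubset_iff_subset_ne.2 ⟨hUs, hne⟩)
      (h1.mono (Finset.subset_inter c1 Finset.inter_subset_right)) c2, zero_mul]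

def hat {ι κ : Type*} [DecidableEq ι] [Fintype κ] (p : κ → ι) (T : Finset ι) : Finset κ :=
  Finset.univ.filter (fun i => p i ∈ T)

lemma mem_hat {ι κ : Type*} [DecidableEq ι] [Fintype κ] {p : κ → ι} {T : Finset ι} {i : κ} :
    i ∈ hat p T ↔ p i ∈ T := by simp [hat]

lemma card_hat {ι κ : Type*} [DecidableEq ι] [Fintype κ] {p : κ → ι}
    (hp : ∀ k, (Finset.univ.filter (fun i => p i = k)).card = 2) (T : Finset ι) :
    (hat p T).card = 2 * T.card := by
  rw [Finset.card_eq_sum_card_fiberwise (f := p) (t := T) (fun i hi => by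
    simpa [hat] using hi)]
  rw [Finset.sum_congr rfl (g := fun _ => 2)]
  · simp [mul_comm]
  · intro k hk
    rw [← hp k]
    congr 1
    ext i
    simp only [hat, Finset.mem_filter, Finset.mem_univ, true_and]
    constructor
    · exact fun h => h.2
    · exact fun h => ⟨h ▸ hk, h⟩

lemma init_hat {ι κ : Type*} [DecidableEq ι] [DecidableEq κ] [Fintype κ] {r : ι → ℕ} {r' : κ → ℕ}
    (hr : Function.Injective r) {p : κ → ι}
    (hp : ∀ k, (Finset.univ.filter (fun i => p i = k)).card = 2)
    (hpr : ∀ i j, r (p i) < r (p j) → r' i < r' j) {T : Finset ι} {U : Finset κ}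
    (hU : U ∈ Init r' (hat p T)) (hev : ¬ Odd U.card) : ∃ V ∈ Init r T, U = hat p V := by
  rw [mem_Init] at hU
  obtain ⟨hUT, hUi⟩ := hU
  have key : ∀ i j, p i = p j → i ∈ U → j ∈ U := by
    intro i j hij hi
    by_contra hj
    apply hev
    have hne : i ≠ j := fun h => hj (h ▸ hi)
    have hpair : Finset.univ.filter (fun l => p l = p i) = {i, j} := by
      symm
      apply Finset.eq_of_subset_of_card_le
      · intro l hl
        simp only [Finset.mem_insert, Finset.mem_singleton] at hl
        rcases hl with rfl | rfl
        · simp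
        · simp [hij]
      · rw [hp, Finset.card_pair hne]
    have hjT : j ∈ hat p T := by
      rw [mem_hat, ← hij]
      exact mem_hat.1 (hUT hi)
    have : U = insert i (hat p (T.filter (fun k => r k < r (p i)))) := by
      ext l
      simp only [Finset.mem_insert, mem_hat, Finset.mem_filter]
      constructor
      · intro hl
        by_cases h : p l = p i
        · left
          have : l ∈ Finset.univ.filter (fun l => p l = p i) := by simp [h]
          rw [hpair] at this
          simp only [Finset.mem_insert, Finset.mem_singleton] at this
          rcases this with h | rfl
          · exact h
          · exact absurd hl hj
        · right
          refine ⟨mem_hat.1 (hUT hl), ?_⟩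
          rcases lt_or_gt_of_ne (fun hh => h (hr hh)) with hlt | hgt
          · exact hlt
          · exact absurd (hUi j hjT l hl (hpr j l (hij ▸ hgt))) hj
      · rintro (rfl | ⟨h1, h2⟩)
        · exact hi
        · exact hUi l (mem_hat.2 h1) i hi (hpr _ _ h2)
    rw [this, Finset.card_insert_of_notMem, card_hat hp]
    · exact ⟨_, rfl⟩
    · simp [mem_hat]
  refine ⟨U.image p, ?_, ?_⟩
  · rw [mem_Init]
    constructor
    · intro k hk
      obtain ⟨i, hi, rfl⟩ := Finset.mem_image.1 hk
      exact mem_hat.1 (hUT hi)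
    · intro k hk j hj hkj
      obtain ⟨i, hi, rfl⟩ := Finset.mem_image.1 hj
      have : (Finset.univ.filter (fun i => p i = k)).Nonempty := by
        rw [← Finset.card_pos, hp]; norm_num
      obtain ⟨l, hl⟩ := this
      have hl : p l = k := by simpa using hl
      subst hl
      exact Finset.mem_image_of_mem p (hUi l (mem_hat.2 hk) i hi (hpr _ _ hkj))
  · ext l
    rw [mem_hat]
    constructor
    · exact fun h => Finset.mem_image_of_mem p h
    · intro h
      obtain ⟨i, hi, hil⟩ := Finset.mem_image.1 h
      exact key i l hil hi

lemma hat_sdiff {ι κ : Type*} [DecidableEq ι] [DecidableEq κ] [Fintype κ] (p : κ → ι)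
    (S T : Finset ι) : hat p (S \ T) = hat p S \ hat p T := by
  ext; simp [mem_hat]

lemma W_hat {ι κ : Type*} [DecidableEq ι] [DecidableEq κ] [Fintype κ] {r : ι → ℕ} {r' : κ → ℕ}
    (hr : Function.Injective r) (hr' : Function.Injective r') {p : κ → ι}
    (hp : ∀ k, (Finset.univ.filter (fun i => p i = k)).card = 2)
    (hpr : ∀ i j, r (p i) < r (p j) → r' i < r' j)
    (m : Finset ι → ℂ) (m' : Finset κ → ℂ) (hm : ∀ T, m T = m' (hat p T))
    (hodd : ∀ U, Odd U.card → W r' m' U = 0) (T : Finset ι) :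
    W r m T = W r' m' (hat p T) := by
  have hsurj : Function.Surjective p := by
    intro k
    have : (Finset.univ.filter (fun i => p i = k)).Nonempty := by
      rw [← Finset.card_pos, hp]; norm_num
    obtain ⟨l, hl⟩ := this
    exact ⟨l, by simpa using hl⟩
  have hinj : Function.Injective (hat p) := by
    intro S T h
    ext k
    obtain ⟨i, rfl⟩ := hsurj k
    rw [← mem_hat, h, mem_hat]
  induction T using Finset.strongInduction with
  | H T ih =>
  rcases T.eq_empty_or_nonempty with rfl | hne
  · have : hat p (∅ : Finset ι) = ∅ := by ext; simp [mem_hat]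
    rw [this, W_empty, W_empty]
  have hne' : (hat p T).Nonempty := by
    rw [← Finset.card_pos, card_hat hp]
    have := hne.card_pos
    omega
  rw [W_rec hr m hne, W_rec hr' m' hne']
  congr 1
  have hsub : ((Init r T).erase T).image (hat p) ⊆ (Init r' (hat p T)).erase (hat p T) := by
    intro U hU
    obtain ⟨V, hV, rfl⟩ := Finset.mem_image.1 hU
    obtain ⟨h1, h2⟩ := Finset.mem_erase.1 hV
    refine Finset.mem_erase.2 ⟨fun h => h1 (hinj h), ?_⟩
    rw [mem_Init] at h2 ⊢
    refine ⟨fun i hi => mem_hat.2 (h2.1 (mem_hat.1 hi)), ?_⟩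
    intro i hi j hj hij
    rw [mem_hat] at *
    rcases lt_trichotomy (r (p i)) (r (p j)) with h | h | h
    · exact h2.2 _ hi _ hj h
    · rw [hr h]; exact hj
    · have := hpr _ _ h
      omega
  rw [← Finset.sum_subset hsub, Finset.sum_image (fun _ _ _ _ h => hinj h)]
  · refine Finset.sum_congr rfl fun U hU => ?_
    obtain ⟨h1, h2⟩ := Finset.mem_erase.1 hU
    rw [ih U (Finset.ssubset_iff_subset_ne.2 ⟨(mem_Init.1 h2).1, h1⟩), hm, hat_sdiff]
  · intro U hU hU'
    rw [hodd, zero_mul]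
    by_contra hev
    obtain ⟨h1, h2⟩ := Finset.mem_erase.1 hU
    obtain ⟨V, hV, rfl⟩ := init_hat hr hp hpr h2 hev
    exact hU' (Finset.mem_image_of_mem _ (Finset.mem_erase.2 ⟨fun h => h1 (h ▸ rfl), hV⟩))

lemma good_map {ι ι' : Type*} {r : ι → ℕ} {r' : ι' → ℕ} (e : ι' ↪ ι)
    (he : ∀ i j, r' i < r' j ↔ r (e i) < r (e j)) {S : Finset ι'} {P : Finset (Finset ι')} :
    Good r (S.map e) (P.map (Finset.mapEmbedding e).toEmbedding) ↔ Good r' S P := by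
  have hmem : ∀ V : Finset ι', V.map e ∈ P.map (Finset.mapEmbedding e).toEmbedding ↔ V ∈ P := by
    intro V
    exact Finset.mem_map' (Finset.mapEmbedding e).toEmbedding
  have hall : ∀ q : Finset ι → Prop,
      (∀ V ∈ P.map (Finset.mapEmbedding e).toEmbedding, q V) ↔ ∀ V ∈ P, q (V.map e) := by
    intro q
    simp [Finset.mapEmbedding_apply]
  unfold Good
  refine and_congr ?_ (and_congr ?_ (and_congr ?_ ?_))
  · rw [hall]
    simp
  · rw [← Finset.map_empty e, hmem]
  · rw [Finset.forall_mem_map]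
    refine forall₂_congr fun i hi => ?_
    constructor
    · rintro ⟨V, ⟨hV, hiV⟩, hu⟩
      obtain ⟨V, hV', rfl⟩ := Finset.mem_map.1 hV
      refine ⟨V, ⟨hV', (Finset.mem_map' e).1 hiV⟩, ?_⟩
      rintro V' ⟨h1, h2⟩
      exact Finset.map_injective e (hu (V'.map e) ⟨(hmem V').2 h1, (Finset.mem_map' e).2 h2⟩)
    · rintro ⟨V, ⟨hV, hiV⟩, hu⟩
      refine ⟨V.map e, ⟨(hmem V).2 hV, (Finset.mem_map' e).2 hiV⟩, ?_⟩
      rintro V' ⟨h1, h2⟩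
      obtain ⟨V', hV', rfl⟩ := Finset.mem_map.1 h1
      have := hu V' ⟨hV', (Finset.mem_map' e).1 h2⟩
      rw [this]; rfl
  · rw [hall]
    refine forall₂_congr fun V hV => ?_
    constructor
    · intro h i j k hi hk hj hij hjk
      exact (Finset.mem_map' e).1 (h (e i) (e j) (e k) ((Finset.mem_map' e).2 hi)
        ((Finset.mem_map' e).2 hk) ((Finset.mem_map' e).2 hj) ((he _ _).1 hij) ((he _ _).1 hjk))
    · intro h i j k hi hk hj hij hjk
      obtain ⟨i, hi, rfl⟩ := Finset.mem_map.1 hi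
      obtain ⟨j, hj, rfl⟩ := Finset.mem_map.1 hj
      obtain ⟨k, hk, rfl⟩ := Finset.mem_map.1 hk
      exact (Finset.mem_map' e).2 (h i j k ((Finset.mem_map' e).1 hi)
        ((Finset.mem_map' e).1 hk) ((Finset.mem_map' e).1 hj) ((he _ _).2 hij) ((he _ _).2 hjk))

lemma W_map {ι ι' : Type*} {r : ι → ℕ} {r' : ι' → ℕ} (e : ι' ↪ ι)
    (he : ∀ i j, r' i < r' j ↔ r (e i) < r (e j)) (m : Finset ι → ℂ) (m' : Finset ι' → ℂ)
    (hm : ∀ V, m' V = m (V.map e)) (S : Finset ι') :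
    W r m (S.map e) = W r' m' S := by
  classical
  unfold W
  symm
  refine Finset.sum_bij (fun P _ => P.map (Finset.mapEmbedding e).toEmbedding) ?_ ?_ ?_ ?_
  · intro P hP
    rw [mem_BI] at hP ⊢
    exact (good_map e he).2 hP
  · intro P _ Q _ h
    exact Finset.map_injective _ h
  · intro P hP
    rw [mem_BI] at hP
    have : P = (P.image (fun V => V.preimage e e.injective.injOn)).map
        (Finset.mapEmbedding e).toEmbedding := by
      have key : ∀ V ∈ P, (V.preimage e e.injective.injOn).map e = V := by
        intro V hV
        ext i
        simp only [Finset.mem_map, Finset.mem_preimage]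
        constructor
        · rintro ⟨a, ha, rfl⟩
          exact ha
        · intro hi
          obtain ⟨a, -, rfl⟩ := Finset.mem_map.1 (hP.1 V hV hi)
          exact ⟨a, hi, rfl⟩
      rw [Finset.map_eq_image, Finset.image_image]
      symm
      have h2 : P.image ((Finset.mapEmbedding e).toEmbedding ∘
          fun V => V.preimage e e.injective.injOn) = P.image id := by
        refine Finset.image_congr fun V hV => ?_
        exact key V hV
      rw [h2, Finset.image_id]
    refine ⟨P.image (fun V => V.preimage e e.injective.injOn), ?_, this.symm⟩
    rw [mem_BI, ← good_map e he, ← this]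
    exact hP
  · intro P _
    rw [Finset.card_map, Finset.prod_map]
    congr 1
    exact Finset.prod_congr rfl fun V _ => hm V

lemma chiRank_inj {n : ℕ} (χ : Fin n → Bool) : Function.Injective (chiRank χ) := by
  intro i j h
  unfold chiRank at h
  ext
  have := i.2
  have := j.2
  split_ifs at h <;> omega

lemma Bcum_eq {A : Type*} [Monoid A] (φ : A → ℂ) {n : ℕ} (hn : 1 ≤ n) (χ : Fin n → Bool)
    (a : Fin n → A) : Bcum φ χ a = - W (chiRank χ) (phiV φ a) Finset.univ := by
  unfold Bcum W
  have : BIset χ = BI (chiRank χ) Finset.univ := by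
    ext P
    rw [mem_BI]
    classical
    unfold BIset
    rw [Finset.mem_filter]
    simp only [Finset.mem_univ, true_and, IsPartition, Good,
      IsChiInterval, chiLT, Finset.subset_univ, implies_true, forall_true_left]
    tauto
  rw [this, ← Finset.sum_neg_distrib]
  refine Finset.sum_congr rfl fun P hP => ?_
  rw [mem_BI] at hP
  obtain ⟨V, ⟨hV, -⟩, -⟩ := hP.2.2.1 ⟨0, hn⟩ (Finset.mem_univ _)
  obtain ⟨k, hk⟩ := Nat.exists_eq_add_of_lt (Finset.card_pos.2 ⟨V, hV⟩)
  rw [hk]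
  simp [pow_succ]

lemma chiRank_comp {k n : ℕ} (χ : Fin n → Bool) (e : Fin k ↪o Fin n) (i j : Fin k) :
    chiRank (fun t => χ (e t)) i < chiRank (fun t => χ (e t)) j ↔
      chiRank χ (e i) < chiRank χ (e j) := by
  have h1 : i < j ↔ e i < e j := e.lt_iff_lt.symm
  have h2 : j < i ↔ e j < e i := e.lt_iff_lt.symm
  rw [Fin.lt_def, Fin.lt_def] at h1 h2
  have := i.2
  have := j.2
  have := (e i).2
  have := (e j).2
  unfold chiRank
  simp only
  split_ifs <;> omega

lemma W_restrict {A : Type*} [Monoid A] (φ : A → ℂ) {n : ℕ} (χ : Fin n → Bool)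
    (a : Fin n → A) (S : Finset (Fin n)) (hS : S.Nonempty) :
    W (chiRank χ) (phiV φ a) S =
      - Bcum φ (fun t => χ (S.orderEmbOfFin rfl t)) (fun t => a (S.orderEmbOfFin rfl t)) := by
  rw [Bcum_eq _ hS.card_pos, neg_neg]
  conv_lhs => rw [← Finset.map_orderEmbOfFin_univ S rfl]
  apply W_map
  · intro i j
    exact chiRank_comp χ (S.orderEmbOfFin rfl) i j
  · intro V
    unfold phiV
    rw [← StrictMonoOn.map_finsetSort, List.map_map]
    · rfl
    · exact (S.orderEmbOfFin rfl).strictMono.strictMonoOn _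

lemma phiV_empty {A : Type*} [Monoid A] (φ : A → ℂ) (h : φ 1 = 1) {n : ℕ} (a : Fin n → A) :
    phiV φ a ∅ = 1 := by
  simp [phiV, h]

/-- The projection of doubled indices. -/
def half {n : ℕ} (i : Fin (2 * n)) : Fin n := ⟨i.val / 2, by omega⟩

/-- The even lift. -/
def ev {n : ℕ} (k : Fin n) : Fin (2 * n) := ⟨2 * k.val, by omega⟩

/-- The odd lift. -/
def od {n : ℕ} (k : Fin n) : Fin (2 * n) := ⟨2 * k.val + 1, by omega⟩

lemma fiber_half {n : ℕ} (k : Fin n) :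
    (Finset.univ.filter (fun i => half i = k)).card = 2 := by
  have : Finset.univ.filter (fun i => half i = k) = {ev k, od k} := by
    ext i
    simp only [Finset.mem_filter, Finset.mem_univ, true_and, Finset.mem_insert,
      Finset.mem_singleton, half, ev, od, Fin.ext_iff]
    omega
  rw [this, Finset.card_pair]
  simp [ev, od, Fin.ext_iff]

lemma hat_rank {n : ℕ} (χ : Fin n → Bool) (i j : Fin (2 * n))
    (h : chiRank χ (half i) < chiRank χ (half j)) :
    chiRank (hatChi χ) i < chiRank (hatChi χ) j := by
  have e : ∀ i, hatChi χ i = χ (half i) := fun _ => rfl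
  have v : ∀ i : Fin (2 * n), (half i).val = i.val / 2 := fun _ => rfl
  unfold chiRank at *
  rw [e, e]
  rw [v, v] at h
  have := i.2
  have := j.2
  split_ifs at * <;> omega

lemma phiV_hat {A : Type*} [Monoid A] (φ : A → ℂ) {n : ℕ} (b : Fin (2 * n) → A) (c : Fin n → A)
    (hc : ∀ k, c k = b (ev k) * b (od k)) (T : Finset (Fin n)) :
    phiV φ c T = phiV φ b (hat half T) := by
  unfold phiV
  congr 1
  induction T using Finset.induction_on_min with
  | empty =>
    have : hat half (∅ : Finset (Fin n)) = ∅ := by ext; simp [mem_hat]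
    rw [this]; simp
  | insert a s ha ih =>
    have hn : a ∉ s := fun h => lt_irrefl _ (ha a h)
    have : hat half (insert a s) = insert (ev a) (insert (od a) (hat half s)) := by
      ext i
      simp only [mem_hat, Finset.mem_insert]
      have : half i = a ↔ i = ev a ∨ i = od a := by
        simp only [half, ev, od, Fin.ext_iff]
        omega
      rw [this]; tauto
    have hs : ∀ i ∈ hat half s, ev a < i ∧ od a < i := by
      intro i hi
      have := ha _ (mem_hat.1 hi)
      simp only [half, ev, od, Fin.lt_def] at this ⊢
      omega
    have heo : ev a < od a := by simp [ev, od, Fin.lt_def]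
    rw [this, Finset.sort_insert _ (fun b hb => (ha b hb).le) hn, Finset.sort_insert,
      Finset.sort_insert]
    · simp only [List.map_cons, List.prod_cons]
      rw [ih, hc, mul_assoc]
    · exact fun i hi => (hs i hi).2.le
    · exact fun h => lt_irrefl _ (hs _ h).2
    · intro i hi
      rcases Finset.mem_insert.1 hi with rfl | hi
      · exact heo.le
      · exact (hs i hi).1.le
    · intro h
      rcases Finset.mem_insert.1 h with h | h
      · exact heo.ne h
      · exact lt_irrefl _ (hs _ h).1

lemma not_chain {k : ℕ} (χ ε : Fin k → Bool) (i j : Fin k) (hij : chiRank χ i < chiRank χ j)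
    (hb : ∀ l, chiRank χ i < chiRank χ l → chiRank χ j ≤ chiRank χ l) (he : ε i = ε j) :
    ¬ ((chiSorted χ).map ε).IsChain (· ≠ ·) := by
  intro hc
  have hp : (chiSorted χ).Pairwise (fun i j => chiRank χ i ≤ chiRank χ j) := by
    have := List.pairwise_mergeSort (le := fun i j : Fin k => decide (chiRank χ i ≤ chiRank χ j))
      (by intro a b c; simp; omega) (by intro a b; simp; omega) (List.finRange k)
    refine this.imp ?_
    intro a b h
    simpa using h
  have hnd : (chiSorted χ).Nodup :=
    (List.mergeSort_perm _ _).nodup_iff.2 (List.nodup_finRange k)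
  have hmem : ∀ l, l ∈ chiSorted χ := by
    intro l
    simp [chiSorted]
  obtain ⟨s, t, hst⟩ := List.append_of_mem (hmem i)
  have hj := hmem j
  rw [hst] at hj hp hc hnd
  rw [List.pairwise_append] at hp
  obtain ⟨-, hp2, hp3⟩ := hp
  have hjt : j ∈ t := by
    rcases List.mem_append.1 hj with h | h
    · have := hp3 j h i (by simp)
      omega
    · rcases List.mem_cons.1 h with h | h
      · subst h; omega
      · exact h
  cases t with
  | nil => simp at hjt
  | cons h t =>
    have hh : h = j := by
      apply chiRank_inj χ
      rw [List.pairwise_cons] at hp2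
      have h1 := hp2.1 h (by simp)
      have hne : h ≠ i := by
        rintro rfl
        have := (List.nodup_append.1 hnd).2.1
        simp at this
      have h1' : chiRank χ i < chiRank χ h := lt_of_le_of_ne h1 (fun hh => hne (chiRank_inj χ hh).symm)
      have h2 := hb h h1'
      rcases List.mem_cons.1 hjt with h3 | h3
      · rw [h3]
      · have := (List.pairwise_cons.1 hp2.2).1 j h3
        omega
    subst hh
    rw [List.map_append, List.map_cons, List.map_cons] at hc
    have := hc.right_of_append
    rw [List.isChain_cons_cons] at this
    exact this.1 he

lemma W_odd {A : Type*} [Monoid A] [StarMul A] (φ : A → ℂ) (x y : A)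
    (hxy : EtaDiagonalPair φ x y) {n : ℕ} (χ ε : Fin n → Bool) (S : Finset (Fin n))
    (hS : Odd S.card) :
    W (chiRank χ) (phiV φ (fun i => pairElem x y (χ i) (ε i))) S = 0 := by
  have hne : S.Nonempty := Finset.card_pos.1 hS.pos
  rw [W_restrict _ _ _ _ hne, neg_eq_zero]
  apply hxy _ hne.card_pos (fun t => χ (S.orderEmbOfFin rfl t)) (fun t => ε (S.orderEmbOfFin rfl t))
  rintro ⟨h, -⟩
  exact (Nat.not_even_iff_odd.2 hS) h

lemma W_cross {A : Type*} [Monoid A] [StarMul A] (φ : A → ℂ) (x y : A)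
    (hxy : EtaDiagonalPair φ x y) {n : ℕ} (χ ε : Fin n → Bool) (S : Finset (Fin n))
    (i j : Fin n) (hi : i ∈ S) (hj : j ∈ S) (hχi : χ i = true) (hχj : χ j = false)
    (hmi : ∀ l ∈ S, χ l = true → l ≤ i) (hmj : ∀ l ∈ S, χ l = false → l ≤ j)
    (he : ε i = ε j) :
    W (chiRank χ) (phiV φ (fun i => pairElem x y (χ i) (ε i))) S = 0 := by
  have hne : S.Nonempty := ⟨i, hi⟩
  rw [W_restrict _ _ _ _ hne, neg_eq_zero]
  apply hxy _ hne.card_pos (fun t => χ (S.orderEmbOfFin rfl t)) (fun t => ε (S.orderEmbOfFin rfl t))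
  rintro ⟨-, h⟩
  have hs : ∀ l ∈ S, ∃ t, S.orderEmbOfFin rfl t = l := by
    intro l hl
    have : l ∈ Set.range (S.orderEmbOfFin rfl) := by
      rw [Finset.range_orderEmbOfFin]; exact hl
    exact this
  obtain ⟨i, rfl⟩ := hs i hi
  obtain ⟨j, rfl⟩ := hs j hj
  refine not_chain _ _ i j ?_ ?_ he h
  · rw [chiRank_comp]
    unfold chiRank
    rw [hχi, hχj]
    have := (S.orderEmbOfFin rfl i).2
    have := (S.orderEmbOfFin rfl j).2
    simp
    omega
  · intro l hl
    rw [chiRank_comp] at hl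
    rw [← not_lt, chiRank_comp]
    have hlS := Finset.orderEmbOfFin_mem S rfl l
    have h1 := hmi _ hlS
    have h2 := hmj _ hlS
    rw [Fin.le_def] at h1 h2
    have := (S.orderEmbOfFin rfl l).2
    unfold chiRank at *
    rw [hχi] at hl
    rw [hχj]
    cases hc : χ (S.orderEmbOfFin rfl l)
    · have := h2 hc
      simp
      omega
    · have := h1 hc
      rw [hc] at hl
      simp only [if_true] at hl
      omega

lemma even_of_fin {n : ℕ} (i : Fin (2 * n)) (h : i.val % 2 = 0) : i = ev (half i) := by
  simp only [half, ev, Fin.ext_iff]; omega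

lemma hat_chi_ev {n : ℕ} (χ : Fin n → Bool) (k : Fin n) : hatChi χ (ev k) = χ k := by
  simp [hatChi, ev]

lemma hat_chi_od {n : ℕ} (χ : Fin n → Bool) (k : Fin n) : hatChi χ (od k) = χ k := by
  unfold hatChi
  congr 1
  simp only [od, Fin.ext_iff]
  omega

lemma main_const {A : Type*} [Monoid A] [StarMul A] (φ : A → ℂ) (x y : A)
  (hxy : EtaDiagonalPair φ x y) {n : ℕ} (hn : 1 ≤ n) (χ : Fin n → Bool) (ε : Fin (2 * n) → Bool)
  (c : Fin n → A)
  (hc : ∀ k, c k = pairElem x y (χ k) (ε (ev k)) * pairElem x y (χ k) (ε (od k))) :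
    Bcum φ χ c = Bcum φ (hatChi χ) (fun i => pairElem x y (hatChi χ i) (ε i)) := by
  rw [Bcum_eq _ hn, Bcum_eq _ (by omega)]
  congr 1
  rw [W_hat (chiRank_inj χ) (chiRank_inj (hatChi χ)) fiber_half (hat_rank χ) (phiV φ c)
    (phiV φ (fun i => pairElem x y (hatChi χ i) (ε i)))]
  · congr 1
    ext; simp [mem_hat]
  · apply phiV_hat
    intro k
    rw [hat_chi_ev, hat_chi_od, hc]
  · intro U hU
    exact W_odd φ x y hxy _ _ U hU

lemma main_cross {A : Type*} [Monoid A] [StarMul A] (φ : A → ℂ) (h1 : φ 1 = 1) (x y : A)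
  (hxy : EtaDiagonalPair φ x y) {n : ℕ} (hn : 1 ≤ n) (χ : Fin n → Bool) (ε : Fin (2 * n) → Bool)
  (c : Fin n → A)
  (hc : ∀ k, c k = pairElem x y (χ k) (ε (ev k)) * pairElem x y (χ k) (ε (od k)))
  (hε : ∀ i j : Fin n, ε (od i) = ε (od j)) (hχ : ¬ ∀ i j : Fin n, χ i = χ j) :
    Bcum φ χ c = 0 := by
  have hT : ∃ i, χ i = true := by
    by_contra! h
    exact hχ fun i j => by have := h i; have := h j; simp_all
  have hF : ∃ i, χ i = false := by
    by_contra! h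
    exact hχ fun i j => by have := h i; have := h j; simp_all
  rw [Bcum_eq _ hn, neg_eq_zero]
  have hL : ∀ (N : ℕ) (χ : Fin N → Bool), ∀ i ∈ Finset.univ.filter (fun i => χ i = true),
      ∀ j ∉ Finset.univ.filter (fun i => χ i = true), chiRank χ i < chiRank χ j := by
    intro N χ i hi j hj
    simp at hi hj
    simp [chiRank, hi, hj]
    omega
  apply vanish (chiRank_inj χ) _ (phiV_empty φ h1 c) (hL n χ)
  · intro T
    have hcc : ∀ k, c k = (fun i => pairElem x y (hatChi χ i) (ε i)) (ev k) *
        (fun i => pairElem x y (hatChi χ i) (ε i)) (od k) := by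
      intro k
      simp only
      rw [hat_chi_ev, hat_chi_od, hc]
    rw [phiV_hat φ (fun i => pairElem x y (hatChi χ i) (ε i)) c hcc,
      phiV_hat φ (fun i => pairElem x y (hatChi χ i) (ε i)) c hcc,
      phiV_hat φ (fun i => pairElem x y (hatChi χ i) (ε i)) c hcc]
    have f := factor (chiRank_inj (hatChi χ))
      (phiV φ (fun i => pairElem x y (hatChi χ i) (ε i))) (phiV_empty φ h1 _)
      (hL _ (hatChi χ)) (fun S => ∀ k, ev k ∈ S → od k ∈ S) ?_ ?_ ?_ (hat half T) ?_
    · rw [f]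
      have hh : ∀ i, hatChi χ i = χ (half i) := fun _ => rfl
      congr 2
      · ext i
        simp [mem_hat, hh]
      · ext i
        simp [mem_hat, hh]
    · intro S U hS hU hUL k hk
      obtain ⟨a, -⟩ := init_cross (hL _ (hatChi χ)) hU hUL
      rw [mem_Init] at hU
      have ho := hS k (hU.1 hk)
      by_cases hk' : χ k = true
      · apply a
        simp [ho, hat_chi_od, hk']
      · refine hU.2 _ ho _ hk ?_
        simp only [chiRank, hat_chi_od, hat_chi_ev, hk']
        simp only [od, ev]
        have := k.2
        simp
        omega
    · intro S U hS hU hUL k hk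
      obtain ⟨h1, h2⟩ := Finset.mem_sdiff.1 hk
      have ho := hS k h1
      refine Finset.mem_sdiff.2 ⟨ho, fun hu => h2 ?_⟩
      rw [mem_Init] at hU
      refine hU.2 _ h1 _ hu ?_
      have := hUL hu
      simp [hat_chi_od] at this
      simp only [chiRank, hat_chi_od, hat_chi_ev, this]
      simp [od, ev]
    · intro S hS hSL hSR
      obtain ⟨i, hi, hmi⟩ := Finset.exists_max_image _ (fun i => i) hSL
      obtain ⟨j, hj, hmj⟩ := Finset.exists_max_image _ (fun i => i) hSR
      simp at hi hj hmi hmj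
      have hi2 : i.val % 2 = 1 := by
        by_contra h
        have e := even_of_fin i (by omega)
        have ho := hS (half i) (e ▸ hi.1)
        have := hmi _ ho (by rw [hat_chi_od, ← hat_chi_ev χ, ← e]; exact hi.2)
        rw [Fin.le_def] at this
        simp only [od, half] at this
        omega
      have hj2 : j.val % 2 = 1 := by
        by_contra h
        have e := even_of_fin j (by omega)
        have ho := hS (half j) (e ▸ hj.1)
        have := hmj _ ho (by rw [hat_chi_od, ← hat_chi_ev χ, ← e]; exact hj.2)
        rw [Fin.le_def] at this
        simp only [od, half] at this
        omega
      have ei : i = od (half i) := by simp only [half, od, Fin.ext_iff]; omega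
      have ej : j = od (half j) := by simp only [half, od, Fin.ext_iff]; omega
      refine W_cross φ x y hxy _ ε S i j hi.1 hj.1 hi.2 hj.2 ?_ ?_ ?_
      · exact fun l hl h => hmi l hl h
      · exact fun l hl h => hmj l hl h
      · rw [ei, ej]; exact hε _ _
    · intro k
      simp only [mem_hat]
      have e1 : half (ev k) = k := by simp [half, ev]
      have e2 : half (od k) = k := by simp only [half, od, Fin.ext_iff]; omega
      rw [e1, e2]; exact id
  · obtain ⟨i, hi⟩ := hT
    exact ⟨i, by simp [hi]⟩
  · obtain ⟨i, hi⟩ := hF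
    exact ⟨i, by simp [hi]⟩

end EtaAux

/-- For an η-diagonal pair `(x,y)`: the Boolean (l,r)-cumulants of
`(xx*, yy*)` and of `(x*x, y*y)` vanish at non-constant `χ`, and at constant `χ` they are
given by ordinary Boolean cumulants with alternating arguments; in particular the
bi-Boolean η-series of `(xx*, yy*)` and `(x*x, y*y)` are diagonal. -/
theorem etaDiagonalPair_products
    {A : Type*} [Ring A] [Algebra ℂ A] [StarRing A] [StarModule ℂ A]
    (φ : A →ₗ[ℂ] ℂ) (hφ1 : φ 1 = 1) (hφs : ∀ a : A, φ (star a) = starRingEnd ℂ (φ a))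
    (x y : A) (hxy : EtaDiagonalPair (fun z => φ z) x y)
    (n : ℕ) (hn : 1 ≤ n) (χ : Fin n → Bool) :
    ((¬ ∀ i j : Fin n, χ i = χ j) →
      Bcum (fun z => φ z) χ (fun k => if χ k then x * star x else y * star y) = 0 ∧
      Bcum (fun z => φ z) χ (fun k => if χ k then star x * x else star y * y) = 0) ∧
    ((∀ i : Fin n, χ i = true) →
      Bcum (fun z => φ z) χ (fun k => if χ k then x * star x else y * star y) =
        Bcum (fun z => φ z) (hatChi χ)
          (fun i : Fin (2 * n) => if i.val % 2 = 0 then x else star x) ∧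
      Bcum (fun z => φ z) χ (fun k => if χ k then star x * x else star y * y) =
        Bcum (fun z => φ z) (hatChi χ)
          (fun i : Fin (2 * n) => if i.val % 2 = 0 then star x else x)) ∧
    ((∀ i : Fin n, χ i = false) →
      Bcum (fun z => φ z) χ (fun k => if χ k then x * star x else y * star y) =
        Bcum (fun z => φ z) (hatChi χ)
          (fun i : Fin (2 * n) => if i.val % 2 = 0 then y else star y) ∧
      Bcum (fun z => φ z) χ (fun k => if χ k then star x * x else star y * y) =
        Bcum (fun z => φ z) (hatChi χ)
          (fun i : Fin (2 * n) => if i.val % 2 = 0 then star y else y)) := by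

  have ev2 : ∀ k : Fin n, (EtaAux.ev k).val % 2 = 0 := fun k => by simp [EtaAux.ev]
  have od2 : ∀ k : Fin n, (EtaAux.od k).val % 2 = 1 := fun k => by simp [EtaAux.od]
  have hca : ∀ k : Fin n, (fun k => if χ k then x * star x else y * star y) k =
      pairElem x y (χ k) ((fun i : Fin (2 * n) => decide (i.val % 2 = 1)) (EtaAux.ev k)) *
      pairElem x y (χ k) ((fun i : Fin (2 * n) => decide (i.val % 2 = 1)) (EtaAux.od k)) := by
    intro k
    simp only [ev2, od2]
    cases χ k <;> simp [pairElem]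
  have hcb : ∀ k : Fin n, (fun k => if χ k then star x * x else star y * y) k =
      pairElem x y (χ k) ((fun i : Fin (2 * n) => decide (i.val % 2 = 0)) (EtaAux.ev k)) *
      pairElem x y (χ k) ((fun i : Fin (2 * n) => decide (i.val % 2 = 0)) (EtaAux.od k)) := by
    intro k
    simp only [ev2, od2]
    cases χ k <;> simp [pairElem]
  refine ⟨fun h => ⟨?_, ?_⟩, fun h => ⟨?_, ?_⟩, fun h => ⟨?_, ?_⟩⟩
  · exact EtaAux.main_cross (fun z => φ z) hφ1 x y hxy hn χ (fun i => decide (i.val % 2 = 1)) _ hca (by simp [od2]) h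
  · exact EtaAux.main_cross (fun z => φ z) hφ1 x y hxy hn χ (fun i => decide (i.val % 2 = 0)) _ hcb (by simp [od2]) h
  all_goals
    first
    | rw [EtaAux.main_const (fun z => φ z) x y hxy hn χ (fun i => decide (i.val % 2 = 1)) _ hca]
    | rw [EtaAux.main_const (fun z => φ z) x y hxy hn χ (fun i => decide (i.val % 2 = 0)) _ hcb]
    congr 1
    funext i
    have hh : hatChi χ i = χ (EtaAux.half i) := rfl
    rw [hh, h]
    rcases Nat.mod_two_eq_zero_or_one i.val with h2 | h2 <;> simp [h2, pairElem]
end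

section
/- There exist a *-probability space (A, φ) and elements x, y ∈ A such that the pair (x, y) is η-diagonal, but the two pairs of non-unital subalgebras (alg(xx*), alg(yy*)) and (alg(x*x), alg(y*y)) — where alg(a) denotes the non-unital subalgebra of A generated by a — are not bi-Boolean independent. -/
open scoped BigOperators

/-- `P` refines `Q`. -/
def Refines {n : ℕ} (P Q : Finset (Finset (Fin n))) : Prop :=
  ∀ V ∈ P, ∃ W ∈ Q, V ⊆ W

/-- Every block of `P` lies inside a level set of `ω`. -/
def KernelPart {n : ℕ} {K : Type*} (ω : Fin n → K) (P : Finset (Finset (Fin n))) : Prop :=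
  ∀ V ∈ P, ∀ i ∈ V, ∀ j ∈ V, ω i = ω j

/-- `P` is the largest bi-interval partition relative to χ all of whose blocks are
contained in level sets of ω, i.e. `P = π_{ω,χ}`. -/
def IsMaxKernelBI {n : ℕ} {K : Type*} (χ : Fin n → Bool) (ω : Fin n → K)
    (P : Finset (Finset (Fin n))) : Prop :=
  P ∈ BIset χ ∧ KernelPart ω P ∧ ∀ Q ∈ BIset χ, KernelPart ω Q → Refines Q P

/-- Bi-Boolean independence of a family of pairs of non-unital subalgebras. -/
def BiBooleanIndep {A : Type*} [Ring A] [Algebra ℂ A] (φ : A → ℂ) {K : Type*}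
    (Al Ar : K → NonUnitalSubalgebra ℂ A) : Prop :=
  ∀ n : ℕ, 1 ≤ n → ∀ χ : Fin n → Bool, ∀ ω : Fin n → K, ∀ a : Fin n → A,
    (∀ i, a i ∈ (if χ i then Al (ω i) else Ar (ω i))) →
    ∀ P : Finset (Finset (Fin n)), IsMaxKernelBI χ ω P →
      φ (List.ofFn a).prod = ∏ V ∈ P, phiV φ a V

namespace EtaCounter

open Matrix

abbrev M3 := Matrix (Fin 3) (Fin 3) ℂ
abbrev M9 := Matrix (Fin 3 × Fin 3) (Fin 3 × Fin 3) ℂ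

/-- `E₁₂` for `false`, `E₂₁` for `true`. -/
def F (b : Bool) : M3 := if b then Matrix.single 1 0 1 else Matrix.single 0 1 1

def X : M9 := Matrix.kroneckerMap (· * ·) (F false) 1
def Y : M9 := Matrix.kroneckerMap (· * ·) 1 (F true)

/-- The functional. -/
def phi : M9 →ₗ[ℂ] ℂ where
  toFun a := a (0, 0) (0, 0) - a (0, 2) (0, 2) - a (2, 0) (2, 0) + 2 * a (2, 2) (2, 2)
  map_add' a b := by simp only [Matrix.add_apply]; ring
  map_smul' c a := by simp only [Matrix.smul_apply, smul_eq_mul, RingHom.id_apply]; ring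

lemma F_star (b : Bool) : star (F b) = F (!b) := by
  cases b <;> simp [F, Matrix.star_eq_conjTranspose, Matrix.conjTranspose_single]

lemma pair_eq (c e : Bool) : pairElem X Y c e =
    if c then Matrix.kroneckerMap (· * ·) (F e) (1 : M3)
    else Matrix.kroneckerMap (· * ·) (1 : M3) (F (!e)) := by
  have hX : star X = Matrix.kroneckerMap (· * ·) (F true) (1 : M3) := by
    rw [X, Matrix.star_eq_conjTranspose, Matrix.conjTranspose_kronecker,
      ← Matrix.star_eq_conjTranspose, F_star]; simp
  have hY : star Y = Matrix.kroneckerMap (· * ·) (1 : M3) (F false) := by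
    rw [Y, Matrix.star_eq_conjTranspose, Matrix.conjTranspose_kronecker,
      ← Matrix.star_eq_conjTranspose (F true), F_star]; simp
  cases c <;> cases e <;> simp [pairElem, hX, hY] <;> rfl

/-- Word in one side. -/
def W (l : List Bool) : M3 := (l.map F).prod

lemma prod_eq {n : ℕ} (χ ε : Fin n → Bool) (L : List (Fin n)) :
    (L.map (fun i => pairElem X Y (χ i) (ε i))).prod =
      Matrix.kroneckerMap (· * ·) (W ((L.filter (fun i => χ i)).map ε))
        (W ((L.filter (fun i => !χ i)).map (fun i => !ε i))) := by
  induction L with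
  | nil => simp [W]
  | cons i L ih =>
    rw [List.map_cons, List.prod_cons, ih, pair_eq]
    cases h : χ i
    · simp [h, W, ← Matrix.mul_kronecker_mul]
    · simp [h, W, ← Matrix.mul_kronecker_mul]

lemma phi_kron (u v : M3) : phi (Matrix.kroneckerMap (· * ·) u v) =
    u 0 0 * v 0 0 - u 0 0 * v 2 2 - u 2 2 * v 0 0 + 2 * (u 2 2 * v 2 2) := rfl

lemma W22 (l : List Bool) (h : l ≠ []) : W l 2 2 = 0 := by
  cases l with
  | nil => exact absurd rfl h
  | cons b l =>
    cases b <;> simp [W, F, Matrix.mul_apply, Fin.sum_univ_three, Matrix.single_apply]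

/-- `(false, true)` repeated. -/
def ft : ℕ → List Bool
  | 0 => []
  | k + 1 => false :: true :: ft k

lemma W00 : ∀ l : List Bool, W l 0 0 ≠ 0 → ∃ k, l = ft k
  | [], _ => ⟨0, rfl⟩
  | [b], h => by
    exfalso; apply h
    cases b <;> simp [W, F, Matrix.single_apply]
  | b :: c :: l, h => by
    have e : W (b :: c :: l) = F b * (F c * W l) := by simp [W]
    rw [e] at h
    cases b <;> cases c <;>
      simp [F, Matrix.mul_apply, Fin.sum_univ_three, Matrix.single_apply] at h
    obtain ⟨k, hk⟩ := W00 l h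
    exact ⟨k + 1, by rw [hk]; rfl⟩

lemma ft_append (k m : ℕ) : ft k ++ ft m = ft (k + m) := by
  induction k with
  | zero => simp [ft]
  | succ k ih => rw [Nat.add_right_comm]; simp [ft, ih]

lemma ft_len (k : ℕ) : (ft k).length = 2 * k := by
  induction k with
  | zero => rfl
  | succ k ih => simp [ft, ih]; ring

lemma ft_chain (k : ℕ) : (ft k).IsChain (· ≠ ·) := by
  induction k with
  | zero => simp [ft]
  | succ k ih =>
    cases k with
    | zero => simp [ft]
    | succ k => simp [ft] at ih ⊢; exact ih

lemma ft_rev (k : ℕ) : ((ft k).map (fun b => !b)).reverse = ft k := by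
  induction k with
  | zero => rfl
  | succ k ih =>
    have : ft k ++ ft 1 = ft (k + 1) := ft_append k 1
    conv_rhs => rw [← this]
    simp [ft] at ih ⊢
    simp [ih]

lemma key {n : ℕ} (χ ε : Fin n → Bool) (L : List (Fin n)) (hL : L ≠ [])
    (h : phi (L.map (fun i => pairElem X Y (χ i) (ε i))).prod ≠ 0) :
    (∃ i ∈ L, χ i = true) ∧ (∃ i ∈ L, χ i = false) ∧
    (∃ k, (L.filter (fun i => χ i)).map ε = ft k) ∧
    (∃ k, ((L.filter (fun i => !χ i)).reverse).map ε = ft k) := by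
  rw [prod_eq, phi_kron] at h
  have h1 : ∃ i ∈ L, χ i = true := by
    by_contra hc
    push Not at hc
    have e1 : L.filter (fun i => χ i) = [] := by simpa using hc
    have e2 : L.filter (fun i => !χ i) = L := by simpa using hc
    rw [e1, e2, W22 (L.map _) (by simpa using hL)] at h
    apply h; simp [W]
  have h2 : ∃ i ∈ L, χ i = false := by
    by_contra hc
    push Not at hc
    have e1 : L.filter (fun i => !χ i) = [] := by simpa using hc
    have e2 : L.filter (fun i => χ i) = L := by simpa using hc
    rw [e1, e2, W22 (L.map _) (by simpa using hL)] at h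
    apply h; simp [W]
  refine ⟨h1, h2, ?_⟩
  rw [W22 ((L.filter (fun i => χ i)).map ε) (by simpa using h1),
    W22 ((L.filter (fun i => !χ i)).map (fun i => !ε i)) (by simpa using h2)] at h
  simp only [mul_zero, zero_mul, sub_zero, add_zero] at h
  obtain ⟨ha, hb⟩ := mul_ne_zero_iff.mp h
  refine ⟨W00 _ ha, ?_⟩
  obtain ⟨k, hk⟩ := W00 _ hb
  refine ⟨k, ?_⟩
  rw [← ft_rev, ← hk, List.map_reverse]
  simp [Function.comp_def]

lemma rank_inj {n : ℕ} (χ : Fin n → Bool) (i j : Fin n) (h : chiRank χ i = chiRank χ j) :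
    i = j := by
  unfold chiRank at h
  ext
  split_ifs at h <;> omega

lemma rank_lr {n : ℕ} (χ : Fin n → Bool) (i j : Fin n) (hi : χ i = true) (hj : χ j = false) :
    chiRank χ i < chiRank χ j := by
  simp only [chiRank, hi, hj]; simp; omega

lemma sorted_eq {n : ℕ} (χ : Fin n → Bool) : chiSorted χ =
    (List.finRange n).filter (fun i => χ i) ++
      ((List.finRange n).filter (fun i => !χ i)).reverse := by
  have hfr : (List.finRange n).Pairwise (· < ·) := List.pairwise_lt_finRange n
  have hp : (chiSorted χ).Perm ((List.finRange n).filter (fun i => χ i) ++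
      ((List.finRange n).filter (fun i => !χ i)).reverse) := by
    refine (List.mergeSort_perm _ _).trans ?_
    refine (List.filter_append_perm (fun i => χ i) (List.finRange n)).symm.trans ?_
    exact (List.Perm.refl _).append (List.reverse_perm _).symm
  refine hp.eq_of_pairwise (le := fun i j => chiRank χ i ≤ chiRank χ j) ?_ ?_ ?_
  · intro a b _ _ h1 h2
    exact rank_inj χ a b (le_antisymm h1 h2)
  · have := List.pairwise_mergeSort (le := fun i j : Fin n => decide (chiRank χ i ≤ chiRank χ j))
      (by intro a b c h1 h2; simp at *; omega) (by intro a b; simp; omega) (List.finRange n)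
    simpa [chiSorted] using this
  · rw [List.pairwise_append]
    refine ⟨?_, ?_, ?_⟩
    · rw [List.pairwise_filter]
      refine hfr.imp ?_
      intro a b hab ha hb
      simp only [chiRank, ha, hb]; simpa using hab.le
    · rw [List.pairwise_reverse, List.pairwise_filter]
      refine hfr.imp ?_
      intro a b hab ha hb
      simp at ha hb
      have : (a : ℕ) < b := hab
      simp [chiRank, ha, hb]; omega
    · intro a ha b hb
      simp at ha hb
      exact (rank_lr χ a b ha hb).le

lemma eta : EtaDiagonalPair (fun z => phi z) X Y := by
  intro n hn χ ε hne
  unfold Bcum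
  apply Finset.sum_eq_zero
  intro P hP
  apply mul_eq_zero_of_right
  by_contra hprod
  rw [← ne_eq, Finset.prod_ne_zero_iff] at hprod
  simp only [BIset, Finset.mem_filter, Finset.mem_univ, true_and] at hP
  obtain ⟨⟨hemp, hpart⟩, hint⟩ := hP
  have hmix : ∀ V ∈ P, (∃ i ∈ V, χ i = true) ∧ (∃ i ∈ V, χ i = false) := by
    intro V hV
    have hVne : V.sort (· ≤ ·) ≠ [] := by
      intro h0
      apply hemp
      have : V = ∅ := by
        rw [← Finset.sort_toFinset V (· ≤ ·), h0]; rfl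
      rwa [this] at hV
    have := key χ ε _ hVne (hprod V hV)
    exact ⟨by simpa using this.1, by simpa using this.2.1⟩
  obtain ⟨V, ⟨hV, h0⟩, -⟩ := hpart ⟨0, hn⟩
  have hall : V = Finset.univ := by
    rw [Finset.eq_univ_iff_forall]
    intro j
    obtain ⟨U, ⟨hU, hjU⟩, -⟩ := hpart j
    obtain ⟨⟨a, ha, hca⟩, ⟨b, hb, hcb⟩⟩ := hmix V hV
    obtain ⟨⟨a', ha', hca'⟩, ⟨b', hb', hcb'⟩⟩ := hmix U hU
    have hVU : V = U := by
      rcases lt_trichotomy (chiRank χ a) (chiRank χ a') with h | h | h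
      · exact (hpart a').unique ⟨hV, hint V hV a a' b ha hb h (rank_lr χ a' b hca' hcb)⟩ ⟨hU, ha'⟩
      · have := rank_inj χ _ _ h
        subst this
        exact (hpart a).unique ⟨hV, ha⟩ ⟨hU, ha'⟩
      · exact (hpart a).unique ⟨hV, ha⟩ ⟨hU, hint U hU a' a b' ha' hb' h (rank_lr χ a b' hca hcb')⟩
    rw [hVU]; exact hjU
  have hs : V.sort (· ≤ ·) = List.finRange n := by
    rw [hall]; exact Fin.sort_univ n
  have h := hprod V hV
  unfold phiV at h
  rw [hs] at h
  obtain ⟨-, -, ⟨k, hk⟩, ⟨m, hm⟩⟩ := key χ ε _ (by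
    intro h; have := congrArg List.length h; simp at this; omega) h
  have hlist : (chiSorted χ).map ε = ft (k + m) := by
    rw [sorted_eq, List.map_append, hk, hm, ft_append]
  apply hne
  rw [hlist]
  refine ⟨?_, ft_chain _⟩
  have := congrArg List.length hlist
  simp [chiSorted, ft_len] at this
  exact ⟨k + m, by omega⟩

lemma XX : X * star X = Matrix.kroneckerMap (· * ·) (F false * F true) (1 : M3) := by
  have := pair_eq true true
  simp only [pairElem] at this
  rw [this, X]; simp [← Matrix.mul_kronecker_mul]

lemma YY : star Y * Y = Matrix.kroneckerMap (· * ·) (1 : M3) (F false * F true) := by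
  have := pair_eq false true
  simp only [pairElem] at this
  rw [this, Y]; simp [← Matrix.mul_kronecker_mul]

lemma FF : F false * F true = Matrix.single 0 0 1 := by simp [F]

lemma pmax : IsMaxKernelBI (n := 2) ![true, false] ![true, false] {{0}, {1}} := by
  refine ⟨?_, ?_, ?_⟩
  · simp only [BIset, Finset.mem_filter, Finset.mem_univ, true_and]
    refine ⟨⟨by decide, ?_⟩, ?_⟩
    · intro i
      refine ⟨{i}, ?_, ?_⟩
      · fin_cases i <;> simp
      · rintro V ⟨hV, hi⟩
        simp at hV
        rcases hV with rfl | rfl <;> simp at hi <;> rw [hi]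
    · intro V hV i j k hi hk h1 h2
      simp at hV
      rcases hV with rfl | rfl <;> simp at hi hk <;> subst hi hk <;> unfold chiLT at h1 h2 <;> omega
  · intro V hV i hi j hj
    simp at hV
    rcases hV with rfl | rfl <;> simp at hi hj <;> rw [hi, hj]
  · intro Q _ hK V hV
    by_cases h0 : (0 : Fin 2) ∈ V
    · refine ⟨{0}, by simp, ?_⟩
      intro j hj
      have := hK V hV 0 h0 j hj
      fin_cases j <;> simp at this ⊢
    · refine ⟨{1}, by simp, ?_⟩
      intro j hj
      fin_cases j
      · exact absurd hj h0
      · simp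

end EtaCounter

/-- There exist a `*`-probability space and an η-diagonal pair `(x, y)` such that the
pairs of non-unital subalgebras `(alg(xx*), alg(yy*))` and `(alg(x*x), alg(y*y))` are
not bi-Boolean independent. -/
theorem exists_etaDiagonal_pair_not_biBoolean_indep :
    ∃ (A : Type) (_ : Ring A) (_ : Algebra ℂ A) (_ : StarRing A) (_ : StarModule ℂ A)
      (φ : A →ₗ[ℂ] ℂ) (x y : A),
      φ 1 = 1 ∧ (∀ a : A, φ (star a) = starRingEnd ℂ (φ a)) ∧
      EtaDiagonalPair (fun z => φ z) x y ∧
      ¬ BiBooleanIndep (fun z => φ z)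
        (fun k : Bool => if k then NonUnitalAlgebra.adjoin ℂ {x * star x}
          else NonUnitalAlgebra.adjoin ℂ {star x * x})
        (fun k : Bool => if k then NonUnitalAlgebra.adjoin ℂ {y * star y}
          else NonUnitalAlgebra.adjoin ℂ {star y * y}) := by
  refine ⟨EtaCounter.M9, inferInstance, inferInstance, inferInstance, inferInstance,
    EtaCounter.phi, EtaCounter.X, EtaCounter.Y, ?_, ?_, EtaCounter.eta, ?_⟩
  · simp [EtaCounter.phi]; norm_num
  · intro a
    simp [EtaCounter.phi, Matrix.star_apply]
    left; exact (Complex.conj_ofNat 2).symm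
  · intro h
    have h2 := h 2 (by norm_num) ![true, false] ![true, false]
      ![EtaCounter.X * star EtaCounter.X, star EtaCounter.Y * EtaCounter.Y]
      (by
        intro i
        fin_cases i
        · simpa using NonUnitalAlgebra.subset_adjoin ℂ (Set.mem_singleton _)
        · simpa using NonUnitalAlgebra.subset_adjoin ℂ (Set.mem_singleton _))
      _ EtaCounter.pmax
    rw [Finset.prod_pair (by decide)] at h2
    simp only [phiV, Finset.sort_singleton, List.ofFn_succ, List.ofFn_zero, List.map_cons,
      List.map_nil, List.prod_cons, List.prod_nil, mul_one, Matrix.cons_val_zero,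
      Matrix.cons_val_one, Fin.succ_zero_eq_one] at h2
    rw [EtaCounter.XX, EtaCounter.YY, ← Matrix.mul_kronecker_mul, EtaCounter.FF, mul_one, one_mul,
      EtaCounter.phi_kron, EtaCounter.phi_kron, EtaCounter.phi_kron] at h2
    simp [Matrix.single_apply] at h2
end

section
/- Let A be a unital C*-algebra and φ a faithful tracial state on A. Let x, y ∈ A, and let u ∈ A be a Haar unitary such that {u} and {x, y} are *-free. Then the pair (x, y) satisfies condition (3.6) if and only if the pairs (x, y) and (ux, uy) have the same bi-*-distribution. -/
section
variable {A : Type*} [Ring A] [Algebra ℂ A] [StarRing A] [StarModule ℂ A]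

/-- The alternating product `x^{ω(1)} ⋯ x^{ω(k₁)} y^{ω(k₁+1)} ⋯ y^{ω(m)}`:
the first `k₁` letters are from `{x, x*}`, the remaining ones from `{y, y*}`,
with star-parities given by `ω` (`true` = starred). -/
def altProd (x y : A) (m k₁ : ℕ) (ω : Fin m → Bool) : A :=
  (List.ofFn (fun t : Fin m =>
    if t.val < k₁ then (if ω t then star x else x)
    else (if ω t then star y else y))).prod

/-- The factor of the sets `P_{i,j}(x,y)`: for odd length the alternating product itself,
for even length the centered alternating product `z - φ(z)·1`. -/
noncomputable def facElt (φ : A → ℂ) (x y : A) (m k₁ : ℕ) (ω : Fin m → Bool) : A :=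
  if Odd m then altProd x y m k₁ ω
  else altProd x y m k₁ ω - φ (altProd x y m k₁ ω) • (1 : A)

/-- Condition (3.6): the expectations of the admissible products
`p_{i₁,i₂} p_{i₂,i₃} ⋯ p_{i_{n-1},i_n}` of factors from the sets `P_{i,j}(x,y)` vanish.
Factor `i` is an alternating word of length `len i ≥ 1` with `kk i` letters from
`{x, x*}` followed by `len i - kk i` letters from `{y, y*}`; the chain condition links the
second index of each factor with the first index of the next one; and the factors are
ordered so that either (i) the `x`-only factors precede the `y`-only factors, or (ii)
exactly one factor mixes letters of both types, with `x`-only factors before it and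
`y`-only factors after it. -/
noncomputable def Condition36 (φ : A → ℂ) (x y : A) : Prop :=
  ∀ N : ℕ, 1 ≤ N → ∀ len kk : Fin N → ℕ, ∀ ω : (i : Fin N) → Fin (len i) → Bool,
    (∀ i, 1 ≤ len i) →
    (∀ i, kk i ≤ len i) →
    (∀ i, (List.ofFn (ω i)).Chain' (· ≠ ·)) →
    (∀ i : Fin N, ∀ h : i.val + 1 < N,
      (List.ofFn (ω ⟨i.val + 1, h⟩)).headD false =
        (if Odd (len i) then (List.ofFn (ω i)).headD false
          else !(List.ofFn (ω i)).headD false)) →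
    ((∃ m : ℕ, m ≤ N ∧ (∀ i : Fin N, i.val < m → kk i = len i) ∧
        (∀ i : Fin N, m ≤ i.val → kk i = 0)) ∨
     (∃ m : Fin N, (∀ i : Fin N, i.val < m.val → kk i = len i) ∧
        0 < kk m ∧ kk m < len m ∧ (∀ i : Fin N, m.val < i.val → kk i = 0))) →
    φ (List.ofFn (fun i => facElt φ x y (len i) (kk i) (ω i))).prod = 0

/-- The pairs `(x, y)` and `(x', y')` have the same bi-`*`-distribution. -/
def SameBiDist (φ : A → ℂ) (x y x' y' : A) : Prop :=
  ∀ n : ℕ, 1 ≤ n → ∀ k : ℕ, k ≤ n → ∀ ω : Fin n → Bool,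
    φ (altProd x y n k ω) = φ (altProd x' y' n k ω)

/-- A Haar unitary. -/
def IsHaarUnitary (φ : A → ℂ) (u : A) : Prop :=
  u * star u = 1 ∧ star u * u = 1 ∧
  ∀ n : ℕ, 1 ≤ n → φ (u ^ n) = 0 ∧ φ ((star u) ^ n) = 0

/-- `*`-freeness of a family of subsets: alternating products of centered elements of the
generated unital `*`-subalgebras have zero expectation. -/
def FreeFamily (φ : A → ℂ) {ι : Type*} (S : ι → Set A) : Prop :=
  ∀ m : ℕ, 1 ≤ m → ∀ idx : Fin m → ι,
    (∀ i : Fin m, ∀ h : i.val + 1 < m, idx i ≠ idx ⟨i.val + 1, h⟩) →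
    ∀ a : Fin m → A,
      (∀ i, a i ∈ StarAlgebra.adjoin ℂ (S (idx i)) ∧ φ (a i) = 0) →
      φ (List.ofFn a).prod = 0

end


section Aux36
variable {A : Type*} [Ring A] [Algebra ℂ A] [StarRing A] [StarModule ℂ A]

/-- Value of a letter `(isY, starred)`. -/
def ltr (x y : A) (a : Bool × Bool) : A :=
  if a.1 then (if a.2 then star y else y) else (if a.2 then star x else x)

/-- Value of a word. -/
def evw (x y : A) (w : List (Bool × Bool)) : A := (w.map (ltr x y)).prod

/-- Factor attached to a word. -/
noncomputable def fac (φ : A → ℂ) (x y : A) (w : List (Bool × Bool)) : A :=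
  if Odd w.length then evw x y w else evw x y w - φ (evw x y w) • (1 : A)

/-- star-parity of the first letter -/
def hd (w : List (Bool × Bool)) : Bool := (w.map Prod.snd).headD false

/-- star-parity of the last letter of an alternating word -/
def tl (w : List (Bool × Bool)) : Bool := if Odd w.length then hd w else !hd w

def AltW (w : List (Bool × Bool)) : Prop := (w.map Prod.snd).IsChain (· ≠ ·)

def Srt (w : List (Bool × Bool)) : Prop := w.Pairwise (fun a b => a.1 ≤ b.1)

def GoodL (L : List (List (Bool × Bool))) : Prop :=
  (∀ w ∈ L, w ≠ [] ∧ AltW w) ∧ L.IsChain (fun a b => hd b = tl a)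

lemma evw_append (x y : A) (v w) : evw x y (v ++ w) = evw x y v * evw x y w := by
  simp [evw]

lemma tl_cons (a b : Bool × Bool) (w) (h : a.2 ≠ b.2) : tl (a :: b :: w) = tl (b :: w) := by
  have : a.2 = !b.2 := by
    revert h; cases a.2 <;> cases b.2 <;> simp
  by_cases ho : Odd w.length
  · simp [tl, hd, Nat.odd_add_one, ho, this]
  · simp [tl, hd, Nat.odd_add_one, ho, this]

/-- Splitting into maximal alternating runs. -/
lemma exists_split (w : List (Bool × Bool)) : ∃ L, L.flatten = w ∧ GoodL L := by
  induction w with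
  | nil => exact ⟨[], rfl, by simp [GoodL]⟩
  | cons a w ih =>
    obtain ⟨L, hL, hg, hc⟩ := ih
    cases L with
    | nil =>
      refine ⟨[[a]], by simpa using hL, ?_, by simp⟩
      simp [AltW]
    | cons l L =>
      obtain ⟨hl, hal⟩ := hg l (by simp)
      cases l with
      | nil => exact absurd rfl hl
      | cons b l =>
      by_cases hab : a.2 = b.2
      · refine ⟨[a] :: (b :: l) :: L, by simpa using hL, ?_, ?_⟩
        · intro v hv
          rcases List.mem_cons.1 hv with rfl | hv
          · simp [AltW]
          · exact hg v hv
        · refine List.isChain_cons_cons.2 ⟨?_, hc⟩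
          simp [tl, hd, hab]
      · refine ⟨(a :: b :: l) :: L, by simpa using hL, ?_, ?_⟩
        · intro v hv
          rcases List.mem_cons.1 hv with rfl | hv
          · refine ⟨by simp, ?_⟩
            simp only [AltW, List.map_cons] at hal ⊢
            exact List.isChain_cons_cons.2 ⟨hab, hal⟩
          · exact hg v (by simp [hv])
        · rw [List.isChain_cons] at hc ⊢
          rw [tl_cons _ _ _ hab]
          exact hc

/-! ### comparing expectations -/

section compare
variable (φ : A →ₗ[ℂ] ℂ) (x y x' y' : A)

lemma compare_short (n : ℕ)
    (hs : ∀ w, Srt w → w.length < n → φ (evw x y w) = φ (evw x' y' w))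
    (L : List (List (Bool × Bool))) :
    ∀ p, (∀ w ∈ L, ¬ Odd w.length → φ (evw x y w) = φ (evw x' y' w)) →
      Srt (p ++ L.flatten) → (p ++ L.flatten).length < n →
      φ (evw x y p * (L.map (fac φ x y)).prod) = φ (evw x' y' p * (L.map (fac φ x' y')).prod) := by
  induction L with
  | nil => intro p _ h1 h2; simpa using hs p (by simpa using h1) (by simpa using h2)
  | cons w L ih =>
    intro p hc h1 h2
    have hc' : ∀ w ∈ L, ¬ Odd w.length → φ (evw x y w) = φ (evw x' y' w) :=
      fun v hv => hc v (by simp [hv])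
    have i1 := ih (p ++ w) hc' (by simpa using h1) (by simpa using h2)
    rw [evw_append, evw_append, mul_assoc, mul_assoc] at i1
    by_cases ho : Odd w.length
    · simpa [fac, ho] using i1
    · have hsub : (p ++ L.flatten).Sublist (p ++ (w :: L).flatten) := by simp
      have i2 := ih p hc' (h1.sublist hsub) (lt_of_le_of_lt hsub.length_le h2)
      simp only [List.map_cons, List.prod_cons, fac, ho, if_false, sub_mul, mul_sub, map_sub,
        smul_mul_assoc, one_mul, mul_smul_comm, map_smul]
      rw [i1, i2, hc w (by simp) ho]

lemma compare_top (n : ℕ)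
    (hs : ∀ w, Srt w → w.length < n → φ (evw x y w) = φ (evw x' y' w))
    (L : List (List (Bool × Bool))) :
    ∀ p, (∀ w ∈ L, w ≠ []) → (∀ w ∈ L, ¬ Odd w.length → φ (evw x y w) = φ (evw x' y' w)) →
      Srt (p ++ L.flatten) → (p ++ L.flatten).length ≤ n →
      φ (evw x y p * (L.map (fac φ x y)).prod) = φ (evw x' y' p * (L.map (fac φ x' y')).prod) →
      φ (evw x y (p ++ L.flatten)) = φ (evw x' y' (p ++ L.flatten)) := by
  induction L with
  | nil => intro p _ _ h1 h2 h; simpa using h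
  | cons w L ih =>
    intro p hne hc h1 h2 h
    have hc' : ∀ w ∈ L, ¬ Odd w.length → φ (evw x y w) = φ (evw x' y' w) :=
      fun v hv => hc v (by simp [hv])
    have hne' : ∀ w ∈ L, w ≠ [] := fun v hv => hne v (by simp [hv])
    have i1 := ih (p ++ w) hne' hc' (by simpa using h1) (by simpa using h2)
    rw [evw_append x y p w, evw_append x' y' p w, mul_assoc, mul_assoc] at i1
    simp only [List.flatten_cons, ← List.append_assoc]
    apply i1
    by_cases ho : Odd w.length
    · simpa [fac, ho] using h
    · have hsub : (p ++ L.flatten).Sublist (p ++ (w :: L).flatten) := by simp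
      have hw : 0 < w.length := List.length_pos_iff.2 (hne w (by simp))
      have i2 := compare_short φ x y x' y' n hs L p hc' (h1.sublist hsub) (by
        simp at h2 ⊢; omega)
      simp only [List.map_cons, List.prod_cons, fac, ho, if_false, sub_mul, mul_sub, map_sub,
        smul_mul_assoc, one_mul, mul_smul_comm, map_smul] at h
      rw [i2, hc w (by simp) ho] at h
      exact sub_left_injective h

end compare

/-! ### the Haar unitary side -/

section haar
variable (φ : A →ₗ[ℂ] ℂ) (x y u : A)

def lf (s : Bool) : A := if s then 1 else u
def rt (s : Bool) : A := if s then star u else 1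
def vv (s : Bool) : A := if s then star u else u

lemma rt_lf (s : Bool) : rt u s * lf u s = vv u s := by cases s <;> simp [rt, lf, vv]

lemma ltr_u (a : Bool × Bool) : ltr (u * x) (u * y) a = lf u a.2 * ltr x y a * rt u a.2 := by
  obtain ⟨a, b⟩ := a
  cases a <;> cases b <;> simp [ltr, lf, rt]

lemma evw_u (hu : star u * u = 1) (w : List (Bool × Bool)) (hne : w ≠ []) (hw : AltW w) :
    evw (u * x) (u * y) w = lf u (hd w) * evw x y w * rt u (tl w) := by
  induction w with
  | nil => exact absurd rfl hne
  | cons a w ih =>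
    cases w with
    | nil => simp [evw, ltr_u, hd, tl]
    | cons b w =>
      simp only [AltW, List.map_cons, List.isChain_cons_cons] at hw
      have h := ih (by simp) (by simpa [AltW] using hw.2)
      rw [tl_cons a b w hw.1]
      have e : ∀ x y : A, evw x y (a :: b :: w) = ltr x y a * evw x y (b :: w) := by
        intros; simp [evw]
      have k : rt u a.2 * lf u (hd (b :: w)) = 1 := by
        have := hw.1
        revert this
        simp only [hd, List.map_cons, List.headD_cons]
        cases a.2 <;> cases b.2 <;> simp [rt, lf, hu]
      rw [e, e, h, ltr_u]
      have : hd (a :: b :: w) = a.2 := rfl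
      rw [this]
      calc _ = lf u a.2 * ltr x y a * (rt u a.2 * lf u (hd (b :: w))) * evw x y (b :: w) *
            rt u (tl (b :: w)) := by simp only [mul_assoc]
        _ = _ := by rw [k]; simp only [mul_assoc, mul_one]

lemma phi_even (htr : ∀ a b : A, φ (a * b) = φ (b * a)) (hu : star u * u = 1)
    (w : List (Bool × Bool)) (hne : w ≠ []) (hw : AltW w) (ho : ¬ Odd w.length) :
    φ (evw x y w) = φ (evw (u * x) (u * y) w) := by
  rw [evw_u x y u hu w hne hw]
  simp only [tl, ho, if_false]
  cases hd w
  · rw [htr, ← mul_assoc]; simp [lf, rt, hu]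
  · simp [lf, rt]

lemma fac_u (htr : ∀ a b : A, φ (a * b) = φ (b * a)) (hu : star u * u = 1) (hu' : u * star u = 1)
    (w : List (Bool × Bool)) (hne : w ≠ []) (hw : AltW w) :
    fac φ (u * x) (u * y) w = lf u (hd w) * fac φ x y w * rt u (tl w) := by
  by_cases ho : Odd w.length
  · simp [fac, ho, evw_u x y u hu w hne hw]
  · simp only [fac, ho, if_false]
    rw [← phi_even φ x y u htr hu w hne hw ho, evw_u x y u hu w hne hw]
    simp only [tl, ho, if_false]
    cases hd w <;> simp [lf, rt, mul_sub, sub_mul, hu']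

/-- the two free subalgebras -/
def SS (b : Bool) : Set A := if b then {u} else {x, y}

/-- alternating products of centered elements, the last of type `b` -/
inductive Alt : Bool → A → Prop
  | single (b : Bool) (a : A) : a ∈ StarAlgebra.adjoin ℂ (SS x y u b) → φ a = 0 → Alt b a
  | snoc (b c : Bool) (p a : A) : Alt b p → c ≠ b → a ∈ StarAlgebra.adjoin ℂ (SS x y u c) →
      φ a = 0 → Alt c (p * a)

lemma Alt.exists_list {b : Bool} {p : A} (h : Alt φ x y u b p) :
    ∃ l : List (Bool × A), (l.map Prod.fst).IsChain (· ≠ ·) ∧ (l.map Prod.fst).getLast? = some b ∧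
      (∀ a ∈ l, a.2 ∈ StarAlgebra.adjoin ℂ (SS x y u a.1) ∧ φ a.2 = 0) ∧
      (l.map Prod.snd).prod = p := by
  induction h with
  | single b a h1 h2 => exact ⟨[(b, a)], by simp [h1, h2]⟩
  | snoc b c p a _ hbc h1 h2 ih =>
    obtain ⟨l, c1, c2, c3, c4⟩ := ih
    refine ⟨l ++ [(c, a)], ?_, by simp, ?_, by simp [c4]⟩
    · rw [List.map_append, List.isChain_append]
      refine ⟨c1, by simp, ?_⟩
      rw [c2]; simpa using hbc.symm
    · intro z hz
      rcases List.mem_append.1 hz with hz | hz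
      · exact c3 z hz
      · rw [List.mem_singleton.1 hz]; exact ⟨h1, h2⟩

lemma Alt.zero (hfree : FreeFamily (fun z => φ z) (fun b : Bool => if b then {u} else {x, y}))
    {b : Bool} {p : A} (h : Alt φ x y u b p) : φ p = 0 := by
  obtain ⟨l, c1, c2, c3, c4⟩ := h.exists_list
  have hl : 1 ≤ l.length := by
    rcases l with _ | ⟨a, l⟩
    · simp at c2
    · simp
  have := hfree l.length hl (fun i => (l.get i).1) (by
      intro i h
      have := List.isChain_iff_getElem.1 c1 i.val (by simpa using h)
      simpa using this) (fun i => (l.get i).2) (fun i => c3 _ (List.get_mem l i))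
  have e : List.ofFn (fun i => (l.get i).2) = l.map Prod.snd := by
    apply List.ext_getElem <;> simp
  rw [e, c4] at this
  exact this

def Gd (s : Bool) (G : A) : Prop :=
  ∃ k : ℕ, 1 ≤ k ∧ (G = vv u s ^ k ∨ ∃ p, Alt φ x y u false p ∧ G = p * vv u s ^ k)

lemma vv_mem (s : Bool) (k : ℕ) : vv u s ^ k ∈ StarAlgebra.adjoin ℂ (SS x y u true) := by
  apply pow_mem
  have : u ∈ StarAlgebra.adjoin ℂ (SS x y u true) :=
    StarAlgebra.subset_adjoin ℂ _ (by simp [SS])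
  cases s
  · simpa [vv] using this
  · simpa [vv] using star_mem this

lemma vv_zero (hu : IsHaarUnitary (fun z => φ z) u) (s : Bool) (k : ℕ) (hk : 1 ≤ k) :
    φ (vv u s ^ k) = 0 := by
  have := hu.2.2 k hk
  cases s
  · simpa [vv] using this.1
  · simpa [vv] using this.2

variable {φ x y u}

lemma Gd.alt (hu : IsHaarUnitary (fun z => φ z) u) {s : Bool} {G : A} (h : Gd φ x y u s G) :
    Alt φ x y u true G := by
  obtain ⟨k, hk, rfl | ⟨p, hp, rfl⟩⟩ := h
  · exact .single _ _ (vv_mem x y u s k) (vv_zero φ u hu s k hk)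
  · exact .snoc _ _ _ _ hp (by simp) (vv_mem x y u s k) (vv_zero φ u hu s k hk)

lemma Gd.mul {s : Bool} {G : A} (h : Gd φ x y u s G) : Gd φ x y u s (G * vv u s) := by
  obtain ⟨k, hk, rfl | ⟨p, hp, rfl⟩⟩ := h
  · exact ⟨k + 1, by omega, Or.inl (pow_succ _ _).symm⟩
  · exact ⟨k + 1, by omega, Or.inr ⟨p, hp, by rw [pow_succ, mul_assoc]⟩⟩

lemma Alt.gd {p : A} (h : Alt φ x y u false p) (s : Bool) : Gd φ x y u s (p * vv u s) :=
  ⟨1, le_rfl, Or.inr ⟨p, h, by simp⟩⟩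

variable (φ x y u)

/-- what may precede the next factor -/
def Opn (s : Bool) (G : A) : Prop :=
  (∀ f ∈ StarAlgebra.adjoin ℂ (SS x y u false), φ f = 0 → Alt φ x y u false (G * f)) ∧
  Gd φ x y u s (G * vv u s) ∧ φ (G * rt u s) = 0

variable {φ x y u}

lemma Gd.opn (hu : IsHaarUnitary (fun z => φ z) u)
    (hfree : FreeFamily (fun z => φ z) (fun b : Bool => if b then {u} else {x, y}))
    {s : Bool} {G : A} (h : Gd φ x y u s G) : Opn φ x y u s G := by
  refine ⟨fun f hf h0 => .snoc _ _ _ _ (h.alt hu) (by simp) hf h0, h.mul, ?_⟩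
  cases s
  · simpa [rt] using (h.alt hu).zero φ x y u hfree
  · simpa [rt, vv] using (h.mul.alt hu).zero φ x y u hfree

lemma opn_lf (hu : IsHaarUnitary (fun z => φ z) u) (s : Bool) : Opn φ x y u s (lf u s) := by
  have v1 := vv_zero φ u hu s 1 le_rfl
  refine ⟨fun f hf h0 => ?_, ?_, ?_⟩
  · cases s
    · refine .snoc true _ _ _ (.single _ _ ?_ ?_) (by simp) hf h0
      · simpa [lf, vv] using vv_mem x y u false 1
      · simpa [lf, vv] using v1
    · simpa [lf] using Alt.single _ _ hf h0
  · cases s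
    · exact ⟨2, by omega, Or.inl (by simp [lf, vv, pow_two])⟩
    · exact ⟨1, by omega, Or.inl (by simp [lf, vv])⟩
  · cases s <;> simpa [lf, rt, vv] using v1

lemma evw_mem (w : List (Bool × Bool)) : evw x y w ∈ StarAlgebra.adjoin ℂ (SS x y u false) := by
  apply list_prod_mem
  intro z hz
  obtain ⟨a, -, rfl⟩ := List.mem_map.1 hz
  have hx : x ∈ StarAlgebra.adjoin ℂ (SS x y u false) :=
    StarAlgebra.subset_adjoin ℂ _ (by simp [SS])
  have hy : y ∈ StarAlgebra.adjoin ℂ (SS x y u false) :=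
    StarAlgebra.subset_adjoin ℂ _ (by simp [SS])
  unfold ltr
  split_ifs
  exacts [star_mem hy, hy, star_mem hx, hx]

lemma fac_mem (w : List (Bool × Bool)) : fac φ x y w ∈ StarAlgebra.adjoin ℂ (SS x y u false) := by
  unfold fac
  split_ifs
  · exact evw_mem w
  · exact sub_mem (evw_mem w) (SMulMemClass.smul_mem _ (one_mem _))

lemma main_vanish (hφ1 : φ 1 = 1) (htr : ∀ a b : A, φ (a * b) = φ (b * a))
    (hu : IsHaarUnitary (fun z => φ z) u)
    (hfree : FreeFamily (fun z => φ z) (fun b : Bool => if b then {u} else {x, y}))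
    (L : List (List (Bool × Bool))) :
    ∀ (w : List (Bool × Bool)) (G : A), GoodL (w :: L) → Opn φ x y u (hd w) G →
      φ (G * fac φ x y w * rt u (tl w) * (L.map (fac φ (u * x) (u * y))).prod) = 0 := by
  have hdec : ∀ w : List (Bool × Bool), ∃ (f : A) (c : ℂ), fac φ x y w = f + c • 1 ∧
      f ∈ StarAlgebra.adjoin ℂ (SS x y u false) ∧ φ f = 0 ∧ (c = 0 ∨ hd w = tl w) := by
    intro w
    refine ⟨fac φ x y w - φ (fac φ x y w) • 1, φ (fac φ x y w), by simp, ?_, ?_, ?_⟩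
    · exact sub_mem (fac_mem w) (SMulMemClass.smul_mem _ (one_mem _))
    · simp [hφ1]
    · by_cases ho : Odd w.length
      · right; simp [tl, ho]
      · left; simp [fac, ho, hφ1]
  induction L with
  | nil =>
    intro w G _ hG
    obtain ⟨f, c, e, hf, h0, hc⟩ := hdec w
    rw [e]
    have a1 := hG.1 f hf h0
    have k1 : φ (G * f * rt u (tl w)) = 0 := by
      cases tl w
      · simpa [rt] using a1.zero φ x y u hfree
      · simpa [rt, vv] using ((a1.gd true).alt hu).zero φ x y u hfree
    have k2 : c * φ (G * rt u (tl w)) = 0 := by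
      rcases hc with hc | hc
      · simp [hc]
      · rw [← hc, hG.2.2, mul_zero]
    simp [mul_add, add_mul, k1, k2]
  | cons w' L ih =>
    intro w G hL hG
    obtain ⟨f, c, e, hf, h0, hc⟩ := hdec w
    have hL' : GoodL (w' :: L) := ⟨fun v hv => hL.1 v (by simp [hv]), (List.isChain_cons_cons.1 hL.2).2⟩
    have ht : hd w' = tl w := (List.isChain_cons_cons.1 hL.2).1
    obtain ⟨n1, n2⟩ := hL.1 w' (by simp)
    have a1 := ((hG.1 f hf h0).gd (tl w)).opn hu hfree
    rw [← ht] at a1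
    have k1 := ih w' _ hL' a1
    have k2 : c * φ (G * vv u (hd w') * fac φ x y w' * rt u (tl w') *
        (L.map (fac φ (u * x) (u * y))).prod) = 0 := by
      rcases hc with hc | hc
      · simp [hc]
      · have a2 := hG.2.1.opn hu hfree
        rw [hc, ← ht] at a2
        rw [ih w' _ hL' a2, mul_zero]
    rw [List.map_cons, List.prod_cons, fac_u φ x y u htr hu.2.1 hu.1 w' n1 n2, e, ← ht]
    rw [← rt_lf] at k1 k2
    simp only [mul_add, add_mul, map_add, mul_smul_comm, smul_mul_assoc, mul_one, map_smul,
      smul_eq_mul]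
    simp only [mul_assoc] at k1 k2 ⊢
    rw [k1, k2, add_zero]

lemma cond_u (hφ1 : φ 1 = 1) (htr : ∀ a b : A, φ (a * b) = φ (b * a))
    (hu : IsHaarUnitary (fun z => φ z) u)
    (hfree : FreeFamily (fun z => φ z) (fun b : Bool => if b then {u} else {x, y}))
    (L : List (List (Bool × Bool))) (hne : L ≠ []) (hL : GoodL L) :
    φ (L.map (fac φ (u * x) (u * y))).prod = 0 := by
  cases L with
  | nil => exact absurd rfl hne
  | cons w L =>
    obtain ⟨n1, n2⟩ := hL.1 w (by simp)
    rw [List.map_cons, List.prod_cons, fac_u φ x y u htr hu.2.1 hu.1 w n1 n2]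
    exact main_vanish hφ1 htr hu hfree L w _ hL (opn_lf hu _)

end haar

/-! ### translation between the `Fin`-indexed and list formulations -/

/-- the word encoded by `(m, k, ω)` -/
def wd (m k : ℕ) (ω : Fin m → Bool) : List (Bool × Bool) :=
  List.ofFn (fun t : Fin m => (decide (k ≤ t.val), ω t))

lemma altProd_eq (x y : A) (m k : ℕ) (ω : Fin m → Bool) :
    altProd x y m k ω = evw x y (wd m k ω) := by
  unfold altProd evw wd
  rw [List.map_ofFn]
  congr 2
  funext t
  by_cases h : t.val < k
  · simp [ltr, h]
  · simp [ltr, h, not_lt.1 h]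

lemma facElt_eq (φ : A → ℂ) (x y : A) (m k : ℕ) (ω : Fin m → Bool) :
    facElt φ x y m k ω = fac φ x y (wd m k ω) := by
  unfold facElt fac
  rw [altProd_eq]
  simp [wd]

lemma wd_map (m k : ℕ) (ω : Fin m → Bool) : (wd m k ω).map Prod.snd = List.ofFn ω := by
  rw [wd, List.map_ofFn]; rfl

lemma wd_srt (m k : ℕ) (ω : Fin m → Bool) : Srt (wd m k ω) := by
  unfold Srt wd
  rw [List.pairwise_ofFn]
  intro i j hij
  by_cases h : k ≤ i.val
  · have : k ≤ j.val := h.trans (le_of_lt hij)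
    simp [h, this]
  · simp [h]

lemma srt_exists (w : List (Bool × Bool)) (h : Srt w) :
    ∃ k ≤ w.length, ∀ i (hi : i < w.length), (w[i]).1 = decide (k ≤ i) := by
  induction w with
  | nil => exact ⟨0, by simp⟩
  | cons a w ih =>
    obtain ⟨h1, h2⟩ := List.pairwise_cons.1 h
    cases ha : a.1
    · obtain ⟨k, hk, h3⟩ := ih h2
      refine ⟨k + 1, by simpa using hk, ?_⟩
      intro i hi
      cases i with
      | zero => simp [ha]
      | succ i => simpa using h3 i (by simpa using hi)
    · refine ⟨0, by simp, ?_⟩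
      intro i hi
      cases i with
      | zero => simp [ha]
      | succ i =>
        have := h1 (w[i]'(by simpa using hi)) (by simp)
        rw [ha] at this
        simpa using top_le_iff.1 this

lemma srt_wd (w : List (Bool × Bool)) (h : Srt w) :
    ∃ k ≤ w.length, w = wd w.length k (fun t => (w.get t).2) := by
  obtain ⟨k, hk, h1⟩ := srt_exists w h
  refine ⟨k, hk, ?_⟩
  apply List.ext_getElem
  · simp [wd]
  · intro i h2 h3
    simp only [wd, List.getElem_ofFn]
    exact Prod.ext (h1 i h2) rfl

lemma sameBiDist_iff (φ : A →ₗ[ℂ] ℂ) (x y x' y' : A) :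
    SameBiDist (fun z => φ z) x y x' y' ↔
      ∀ w, Srt w → φ (evw x y w) = φ (evw x' y' w) := by
  constructor
  · intro h w hw
    rcases Nat.eq_zero_or_pos w.length with h0 | h0
    · rw [List.length_eq_zero_iff.1 h0]; simp [evw]
    · obtain ⟨k, hk, e⟩ := srt_wd w hw
      have := h w.length h0 k hk (fun t => (w.get t).2)
      simp only [altProd_eq] at this
      rw [← e] at this
      exact this
  · intro h n _ k _ ω
    simp only [altProd_eq]
    exact h _ (wd_srt _ _ _)

lemma hd_wd (m k : ℕ) (ω : Fin m → Bool) : hd (wd m k ω) = (List.ofFn ω).headD false := by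
  rw [hd, wd_map]

lemma tl_wd (m k : ℕ) (ω : Fin m → Bool) : tl (wd m k ω) =
    if Odd m then (List.ofFn ω).headD false else !(List.ofFn ω).headD false := by
  rw [tl, hd_wd]; simp [wd]

lemma mem_wd {m k : ℕ} {ω : Fin m → Bool} {a : Bool × Bool} (h : a ∈ wd m k ω) :
    (a.1 = true → k < m) ∧ (a.1 = false → 0 < k) := by
  obtain ⟨t, rfl⟩ := (List.mem_ofFn' _ _).1 h
  constructor
  · intro h; simp at h; omega
  · intro h; simp at h; omega

lemma cond36_of (φ : A →ₗ[ℂ] ℂ) (x y : A)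
    (h : ∀ L, L ≠ [] → GoodL L → Srt L.flatten → φ (L.map (fac φ x y)).prod = 0) :
    Condition36 (fun z => φ z) x y := by
  intro N hN len kk ω h1 h2 h3 h4 h5
  have := h (List.ofFn fun i => wd (len i) (kk i) (ω i)) ?_ ⟨?_, ?_⟩ ?_
  · rw [List.map_ofFn] at this
    simp only [facElt_eq]
    exact this
  · intro h; rw [List.ofFn_eq_nil_iff] at h; omega
  · intro w hw
    obtain ⟨i, rfl⟩ := (List.mem_ofFn' _ _).1 hw
    refine ⟨?_, ?_⟩
    · have := h1 i
      intro h; simp only [wd, List.ofFn_eq_nil_iff] at h; omega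
    · unfold AltW; rw [wd_map]; exact h3 i
  · rw [List.isChain_iff_getElem]
    intro i hi
    simp only [List.getElem_ofFn]
    rw [hd_wd, tl_wd]
    exact h4 ⟨i, by simp at hi; omega⟩ (by simpa using hi)
  · unfold Srt
    rw [List.pairwise_flatten]
    constructor
    · intro w hw
      obtain ⟨i, rfl⟩ := (List.mem_ofFn' _ _).1 hw
      exact wd_srt _ _ _
    · rw [List.pairwise_ofFn]
      intro i j hij a ha b hb
      have ha := (mem_wd ha).1
      have hb := (mem_wd hb).2
      cases ea : a.1
      · simp
      · cases eb : b.1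
        · exfalso
          have ha := ha ea
          have hb := hb eb
          have hij : i.val < j.val := hij
          rcases h5 with ⟨m, _, m1, m2⟩ | ⟨m, m1, _, _, m2⟩
          · by_cases hi : i.val < m
            · have := m1 i hi; omega
            · have := m2 j (by omega); omega
          · by_cases hi : i.val < m.val
            · have := m1 i hi; omega
            · have := m2 j (by omega); omega
        · simp

lemma of_cond36 (φ : A →ₗ[ℂ] ℂ) (x y : A) (h : Condition36 (fun z => φ z) x y)
    (L : List (List (Bool × Bool))) (hne : L ≠ []) (hL : GoodL L) (hs : Srt L.flatten) :
    φ (L.map (fac φ x y)).prod = 0 := by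
  unfold Srt at hs
  rw [List.pairwise_flatten] at hs
  obtain ⟨s1, s2⟩ := hs
  have hk : ∀ i : Fin L.length, ∃ k ≤ (L.get i).length,
      L.get i = wd (L.get i).length k (fun t => ((L.get i).get t).2) :=
    fun i => srt_wd _ (s1 _ (List.get_mem L i))
  choose kk hk1 hk2 using hk
  have key : ∀ i j : Fin L.length, i.val < j.val → kk i < (L.get i).length → kk j = 0 := by
    intro i j hij hi
    by_contra hj
    have hj1 := hk1 j
    have hij' := List.pairwise_iff_getElem.1 s2 i.val j.val i.2 j.2 hij
    have mi : ∃ a ∈ L.get i, a.1 = true := by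
      rw [hk2 i]
      exact ⟨_, (List.mem_ofFn' _ _).2 ⟨⟨kk i, hi⟩, rfl⟩, by simp⟩
    have mj : ∃ a ∈ L.get j, a.1 = false := by
      rw [hk2 j]
      exact ⟨_, (List.mem_ofFn' _ _).2 ⟨⟨0, by omega⟩, rfl⟩, by simp [hj]⟩
    obtain ⟨a, ma, ea⟩ := mi
    obtain ⟨b, mb, eb⟩ := mj
    have := hij' a ma b mb
    rw [ea, eb] at this
    exact absurd this (by decide)
  have hpos : ∀ i : Fin L.length, 1 ≤ (L.get i).length := fun i =>
    List.length_pos_iff.2 (hL.1 _ (List.get_mem L i)).1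
  have main := h L.length (List.length_pos_iff.2 hne) (fun i => (L.get i).length) kk
    (fun i t => ((L.get i).get t).2) hpos hk1 ?_ ?_ ?_
  · simp only [facElt_eq] at main
    have e : (List.ofFn fun i => fac (fun z => φ z) x y
        (wd (L.get i).length (kk i) fun t => ((L.get i).get t).2)) = L.map (fac φ x y) := by
      apply List.ext_getElem
      · simp
      · intro i h1 h2
        simp only [List.getElem_ofFn, List.getElem_map]
        rw [← hk2]; rfl
    rw [e] at main
    exact main
  · intro i
    have := (hL.1 _ (List.get_mem L i)).2
    unfold AltW at this
    rw [hk2 i, wd_map] at this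
    exact this
  · intro i hi
    have := List.isChain_iff_getElem.1 hL.2 i.val hi
    have e1 := hd_wd _ (kk ⟨i.val + 1, hi⟩) (fun t => ((L.get ⟨i.val + 1, hi⟩).get t).2)
    have e2 := tl_wd _ (kk i) (fun t => ((L.get i).get t).2)
    rw [← hk2] at e1 e2
    rw [← e1, ← e2]
    exact this
  · by_cases hm : ∃ m : Fin L.length, 0 < kk m ∧ kk m < (L.get m).length
    · right
      obtain ⟨m, m1, m2⟩ := hm
      refine ⟨m, ?_, m1, m2, fun i hi => key m i hi m2⟩
      intro i hi
      by_contra hc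
      have := key i m hi (lt_of_le_of_ne (hk1 i) hc)
      omega
    · left
      push Not at hm
      by_cases hz : ∃ n : ℕ, ∃ hn : n < L.length, kk ⟨n, hn⟩ = 0
      · classical
        obtain ⟨hn, hz0⟩ := Nat.find_spec hz
        refine ⟨Nat.find hz, hn.le, ?_, ?_⟩
        · intro i hi
          have := Nat.find_min hz hi
          have hi0 : kk i ≠ 0 := fun h0 => this ⟨i.2, h0⟩
          exact le_antisymm (hk1 i) (hm i (Nat.pos_of_ne_zero hi0))
        · intro i hi
          rcases hi.eq_or_lt with hi | hi
          · have : i = ⟨Nat.find hz, hn⟩ := Fin.ext hi.symm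
            rw [this]; exact hz0
          · refine key ⟨Nat.find hz, hn⟩ i hi ?_
            rw [hz0]; exact hpos _
      · refine ⟨L.length, le_rfl, ?_, fun i hi => absurd i.2 (by omega)⟩
        intro i _
        have hi0 : kk i ≠ 0 := fun h0 => hz ⟨i.val, i.2, h0⟩
        exact le_antisymm (hk1 i) (hm i (Nat.pos_of_ne_zero hi0))

end Aux36

/-- In a unital C*-algebra with a faithful tracial state, if `u` is a Haar unitary that
is `*`-free from `{x, y}`, then `(x, y)` satisfies condition (3.6) if and only if
`(x, y)` and `(ux, uy)` have the same bi-`*`-distribution. -/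
theorem condition36_iff_sameBiDist
    {A : Type*} [NormedRing A] [StarRing A] [CStarRing A] [NormedAlgebra ℂ A]
    [CompleteSpace A] [StarModule ℂ A]
    (φ : A →ₗ[ℂ] ℂ) (hφ1 : φ 1 = 1) (hφs : ∀ a : A, φ (star a) = starRingEnd ℂ (φ a))
    (hpos : ∀ a : A, 0 ≤ (φ (star a * a)).re ∧ (φ (star a * a)).im = 0)
    (hfaith : ∀ a : A, φ (star a * a) = 0 → a = 0)
    (htr : ∀ a b : A, φ (a * b) = φ (b * a))
    (x y u : A) (hu : IsHaarUnitary (fun z => φ z) u)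
    (hfree : FreeFamily (fun z => φ z) (fun b : Bool => if b then {u} else {x, y})) :
    Condition36 (fun z => φ z) x y ↔
      SameBiDist (fun z => φ z) x y (u * x) (u * y) := by
  have hev : ∀ L, GoodL L → ∀ w ∈ L, ¬ Odd w.length →
      φ (evw x y w) = φ (evw (u * x) (u * y) w) := fun L hL w hw ho =>
    phi_even φ x y u htr hu.2.1 w (hL.1 w hw).1 (hL.1 w hw).2 ho
  rw [sameBiDist_iff]
  constructor
  · intro h
    have key : ∀ n, ∀ w, Srt w → w.length < n → φ (evw x y w) = φ (evw (u * x) (u * y) w) := by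
      intro n
      induction n with
      | zero => intro w _ hw; omega
      | succ n ih =>
        intro w hs hw
        obtain ⟨L, rfl, hL⟩ := exists_split w
        rcases eq_or_ne L [] with rfl | hne
        · simp [evw]
        · have := compare_top φ x y (u * x) (u * y) n ih L [] (fun v hv => (hL.1 v hv).1)
            (hev L hL) (by simpa using hs) (by simpa using Nat.lt_succ_iff.1 hw) (by
              have h1 := of_cond36 φ x y h L hne hL hs
              have h2 := cond_u hφ1 htr hu hfree L hne hL
              simp only [evw, List.map_nil, List.prod_nil, one_mul]
              rw [h1, h2])
          simpa using this
    exact fun w hw => key (w.length + 1) w hw (Nat.lt_succ_self _)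
  · intro h
    apply cond36_of
    intro L hne hL hs
    have := compare_short φ x y (u * x) (u * y) (L.flatten.length + 1) (fun w hw _ => h w hw) L []
      (hev L hL) (by simpa using hs) (by simp)
    simp only [evw, List.map_nil, List.prod_nil, one_mul] at this
    rw [this]
    exact cond_u hφ1 htr hu hfree L hne hL
end
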